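/- arXiv:math/0602249 — 2 statements merged into one kernel-verified Lean document; each statement's English description precedes it below -/
import Mathlib

section
/- Let G = C₅ + K₂ be the join of a 5-cycle and a single edge, and let E(G) = E₁ ∪ E₂ be a (3,3)-free blue-red coloring of E(G) such that all edges of the 5-cycle lie in Eᵢ (for some i ∈ {1,2}). Then the edge of K₂ also lies in Eᵢ. -/
open SimpleGraph

/-- A blue-red coloring of the edges of `G`: a partition `E(G) = E₁ ∪ E₂`,
`E₁ ∩ E₂ = ∅` (edges in `E₁` are blue, edges in `E₂` are red). -/
def IsBRColoring {V : Type*} (G : SimpleGraph V) (E1 E2 : Set (Sym2 V)) : Prop :=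
  E1 ∪ E2 = G.edgeSet ∧ E1 ∩ E2 = ∅

/-- `G` has an `n`-clique all of whose edges lie in the edge set `E`
(a monochromatic `n`-clique in the color `E`). -/
def HasMonoNClique {V : Type*} (G : SimpleGraph V) (E : Set (Sym2 V)) (n : ℕ) : Prop :=
  ∃ S : Finset V, G.IsNClique n S ∧ ∀ x ∈ S, ∀ y ∈ S, x ≠ y → s(x, y) ∈ E

/-- The blue-red coloring `E1, E2` is `(p,q)`-free: there is no blue `p`-clique
and no red `q`-clique. -/
def IsPQFree {V : Type*} (G : SimpleGraph V) (E1 E2 : Set (Sym2 V)) (p q : ℕ) : Prop :=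
  ¬ HasMonoNClique G E1 p ∧ ¬ HasMonoNClique G E2 q

/-- `G → (p,q)` : no blue-red coloring of `E(G)` is `(p,q)`-free. -/
def Arrows {V : Type*} (G : SimpleGraph V) (p q : ℕ) : Prop :=
  ∀ E1 E2 : Set (Sym2 V), IsBRColoring G E1 E2 → ¬ IsPQFree G E1 E2 p q

/-- The neighborhood of `v` in the color `E`: all neighbors `u` of `v`
with `[v,u] ∈ E`.  With `E = E1` this is `N₁(v)`, with `E = E2` it is `N₂(v)`. -/
def colorNbhd {V : Type*} (G : SimpleGraph V) (E : Set (Sym2 V)) (v : V) : Set V :=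
  {u | G.Adj v u ∧ s(v, u) ∈ E}

/-- The join `G + H` of two graphs on disjoint vertex sets: all edges of `G`,
all edges of `H`, and all pairs `[x,y]` with `x ∈ V(G)`, `y ∈ V(H)`. -/
def graphJoin {α β : Type*} (G : SimpleGraph α) (H : SimpleGraph β) :
    SimpleGraph (α ⊕ β) where
  Adj x y :=
    match x, y with
    | .inl a, .inl b => G.Adj a b
    | .inr a, .inr b => H.Adj a b
    | .inl _, .inr _ => True
    | .inr _, .inl _ => True
  symm := by constructor; rintro (a | a) (b | b) <;> simp [SimpleGraph.adj_comm]
  loopless := by constructor; rintro (a | a) <;> simp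

/-- `G` contains a copy of `H` as a subgraph: there is an injective map of the
vertices of `H` into the vertices of `G` sending edges to edges. -/
def ContainsCopy {V W : Type*} (G : SimpleGraph V) (H : SimpleGraph W) : Prop :=
  ∃ f : W ↪ V, ∀ a b : W, H.Adj a b → G.Adj (f a) (f b)

/-- `s` is an independent set of `G`: no two of its vertices are adjacent. -/
def IsIndepSet {V : Type*} (G : SimpleGraph V) (s : Set V) : Prop :=
  ∀ x ∈ s, ∀ y ∈ s, ¬ G.Adj x y

/-- A triangle of `G` with all three edges in `E` is a monochromatic 3-clique. -/
lemma mono_triangle {V : Type*} [DecidableEq V] (G : SimpleGraph V) (E : Set (Sym2 V))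
    (hE : E ⊆ G.edgeSet) (hno : ¬ HasMonoNClique G E 3) (a b c : V)
    (hab : s(a, b) ∈ E) (hac : s(a, c) ∈ E) (hbc : s(b, c) ∈ E) : False := by
  apply hno
  refine ⟨{a, b, c}, ?_, ?_⟩
  · rw [SimpleGraph.is3Clique_triple_iff]
    exact ⟨hE hab, hE hac, hE hbc⟩
  · have hba : s(b, a) ∈ E := Sym2.eq_swap ▸ hab
    have hca : s(c, a) ∈ E := Sym2.eq_swap ▸ hac
    have hcb : s(c, b) ∈ E := Sym2.eq_swap ▸ hbc
    intro x hx y hy hxy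
    simp only [Finset.mem_insert, Finset.mem_singleton] at hx hy
    rcases hx with rfl | rfl | rfl <;> rcases hy with rfl | rfl | rfl <;>
      first | exact absurd rfl hxy | assumption

/-- The color-symmetric core of the lemma. -/
lemma core_color (E F : Set (Sym2 (Fin 5 ⊕ Fin 2)))
    (hcol : E ∪ F = (graphJoin (cycleGraph 5) (⊤ : SimpleGraph (Fin 2))).edgeSet)
    (hE : ¬ HasMonoNClique (graphJoin (cycleGraph 5) (⊤ : SimpleGraph (Fin 2))) E 3)
    (hF : ¬ HasMonoNClique (graphJoin (cycleGraph 5) (⊤ : SimpleGraph (Fin 2))) F 3)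
    (hcyc : Sym2.map Sum.inl '' (cycleGraph 5).edgeSet ⊆ E) :
    s((Sum.inr 0 : Fin 5 ⊕ Fin 2), Sum.inr 1) ∈ E := by
  have tE := mono_triangle _ E (hcol ▸ Set.subset_union_left) hE
  have tF := mono_triangle _ F (hcol ▸ Set.subset_union_right) hF
  by_contra hk
  have hkF : s((Sum.inr 0 : Fin 5 ⊕ Fin 2), Sum.inr 1) ∈ F := by
    have h : s((Sum.inr 0 : Fin 5 ⊕ Fin 2), Sum.inr 1) ∈ E ∪ F := by
      rw [hcol, SimpleGraph.mem_edgeSet]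
      simp [graphJoin]
    exact h.resolve_left hk
  have hor : ∀ (i : Fin 5) (j : Fin 2), s((Sum.inl i : Fin 5 ⊕ Fin 2), Sum.inr j) ∈ E ∨
      s((Sum.inl i : Fin 5 ⊕ Fin 2), Sum.inr j) ∈ F := by
    intro i j
    have h : s((Sum.inl i : Fin 5 ⊕ Fin 2), Sum.inr j) ∈ E ∪ F := by
      rw [hcol, SimpleGraph.mem_edgeSet]
      simp [graphJoin]
    exact h
  -- consecutive cycle vertices cannot both be joined to `j` in color `E`
  have hc : ∀ (i : Fin 5) (j : Fin 2), s((Sum.inl i : Fin 5 ⊕ Fin 2), Sum.inr j) ∈ E →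
      s((Sum.inl (i + 1) : Fin 5 ⊕ Fin 2), Sum.inr j) ∉ E := by
    intro i j h1 h2
    refine tE _ _ _ (hcyc ⟨s(i, i + 1), ?_, rfl⟩) h1 h2
    rw [SimpleGraph.mem_edgeSet, SimpleGraph.cycleGraph_adj]
    simp
  -- no cycle vertex is joined to both apexes in color `F`
  have hd : ∀ i : Fin 5, s((Sum.inl i : Fin 5 ⊕ Fin 2), Sum.inr 0) ∈ E ∨
      s((Sum.inl i : Fin 5 ⊕ Fin 2), Sum.inr 1) ∈ E := by
    intro i
    by_contra! h
    exact tF _ _ _ ((hor i 0).resolve_left h.1) ((hor i 1).resolve_left h.2) hkF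
  -- so the colors at apex `0` alternate around the odd cycle
  have step : ∀ i : Fin 5, s((Sum.inl i : Fin 5 ⊕ Fin 2), Sum.inr 0) ∈ E ↔
      s((Sum.inl (i + 1) : Fin 5 ⊕ Fin 2), Sum.inr 0) ∉ E := by
    intro i
    have := hc i 0
    have := hc i 1
    have := hd i
    have := hd (i + 1)
    tauto
  have h0 := step 0
  have h1 := step 1
  have h2 := step 2
  have h3 := step 3
  have h4 := step 4
  simp only [show (0 : Fin 5) + 1 = 1 from rfl, show (1 : Fin 5) + 1 = 2 from rfl,
    show (2 : Fin 5) + 1 = 3 from rfl, show (3 : Fin 5) + 1 = 4 from rfl,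
    show (4 : Fin 5) + 1 = 0 from rfl] at h0 h1 h2 h3 h4
  tauto

/-- **Lemma 2.3.** Let `G = C₅ + K₂` and let `E(G) = E₁ ∪ E₂` be a `(3,3)`-free
blue-red coloring such that `E(C₅) ⊆ Eᵢ`.  Then the edge of `K₂` also lies in `Eᵢ`. -/
theorem C5_join_K2_edge_color (E1 E2 : Set (Sym2 (Fin 5 ⊕ Fin 2)))
    (hcol : IsBRColoring (graphJoin (cycleGraph 5) (⊤ : SimpleGraph (Fin 2))) E1 E2)
    (hfree : IsPQFree (graphJoin (cycleGraph 5) (⊤ : SimpleGraph (Fin 2))) E1 E2 3 3) :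
    ∀ E ∈ ({E1, E2} : Set (Set (Sym2 (Fin 5 ⊕ Fin 2)))),
      Sym2.map Sum.inl '' (cycleGraph 5).edgeSet ⊆ E →
      s((Sum.inr 0 : Fin 5 ⊕ Fin 2), Sum.inr 1) ∈ E := by
  rintro E (rfl | rfl) hcyc
  · exact core_color E E2 hcol.1 hfree.1 hfree.2 hcyc
  · exact core_color E E1 (Set.union_comm E E1 ▸ hcol.1) hfree.2 hfree.1 hcyc
end

section
/- Let G = K₁ + C₅⁽¹⁾ + C₅⁽²⁾ + C₅⁽³⁾, where C₅⁽¹⁾, C₅⁽²⁾, C₅⁽³⁾ are disjoint copies of the 5-cycle. Let E(G) = E₁ ∪ E₂ be a blue-red coloring of E(G) such that at least one of the cycles C₅⁽¹⁾, C₅⁽²⁾, C₅⁽³⁾ is not monochromatic. Then this coloring is not (3,4)-free, i.e., it contains a blue 3-clique or a red 4-clique. -/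
open SimpleGraph

/-- The vertex set of `K₁ + C₅ + C₅ + C₅`. -/
abbrev V16 : Type := Fin 1 ⊕ (Fin 5 ⊕ (Fin 5 ⊕ Fin 5))

/-- The graph `K₁ + C₅⁽¹⁾ + C₅⁽²⁾ + C₅⁽³⁾`. -/
def G16 : SimpleGraph V16 :=
  graphJoin (⊤ : SimpleGraph (Fin 1))
    (graphJoin (cycleGraph 5) (graphJoin (cycleGraph 5) (cycleGraph 5)))

/-- Embedding of the first copy of `C₅` into the vertex set of `K₁ + C₅ + C₅ + C₅`. -/
def ι1 : Fin 5 → V16 := fun i => Sum.inr (Sum.inl i)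

/-- Embedding of the second copy of `C₅`. -/
def ι2 : Fin 5 → V16 := fun i => Sum.inr (Sum.inr (Sum.inl i))

/-- Embedding of the third copy of `C₅`. -/
def ι3 : Fin 5 → V16 := fun i => Sum.inr (Sum.inr (Sum.inr i))

/-- The vertex sets `V(C₅⁽¹⁾), V(C₅⁽²⁾), V(C₅⁽³⁾)` inside `K₁ + C₅ + C₅ + C₅`. -/
def cycVerts : Fin 3 → Set V16 := ![Set.range ι1, Set.range ι2, Set.range ι3]

/-- The edge sets `E(C₅⁽¹⁾), E(C₅⁽²⁾), E(C₅⁽³⁾)` inside `K₁ + C₅ + C₅ + C₅`. -/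
def cycEdges : Fin 3 → Set (Sym2 V16) :=
  ![Sym2.map ι1 '' (cycleGraph 5).edgeSet,
    Sym2.map ι2 '' (cycleGraph 5).edgeSet,
    Sym2.map ι3 '' (cycleGraph 5).edgeSet]


/-! ### A verified backtracking search

Vertices are `0, …, 15` (`0` is the vertex of `K₁`, `1-5`, `6-10`, `11-15` are the cycles).
A set of edges is a 256-bit mask; the edge `{a, b}` occupies the bits `16 * a + b`, `16 * b + a`. -/

/-- Adjacency (for `a < b`) in the model of `K₁ + C₅ + C₅ + C₅` on `0, …, 15`. -/
def adjm (a b : ℕ) : Bool :=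
  Nat.blt a b && Nat.blt b 16 &&
    (Nat.beq a 0 || !(Nat.beq ((a - 1) / 5) ((b - 1) / 5)) || Nat.beq b (a + 1) ||
      Nat.beq b (a + 4))

/-- Insert the edge `{a, b}`. -/
def ins (M a b : ℕ) : ℕ := M ||| (2 ^ (16 * a + b) ||| 2 ^ (16 * b + a))

/-- Insert a list of edges, coded as `16 * a + b`. -/
def insAll (M : ℕ) : List ℕ → ℕ
  | [] => M
  | e :: l => insAll (ins M (e / 16) (e % 16)) l

/-- Common neighbours of `a` and `b`. -/
def common (M a b : ℕ) : ℕ := (M >>> (16 * a)) &&& (M >>> (16 * b)) &&& 65535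

/-- Is there an edge of `M` among the vertices of `C` with one end `< n`? -/
def edgeIn (M C : ℕ) : ℕ → Bool
  | 0 => false
  | n + 1 => (C.testBit n && !(Nat.beq ((M >>> (16 * n)) &&& C) 0)) || edgeIn M C n

/-- Backtracking: branch over the colors of the edges in the order prescribed by the list. -/
def search : ℕ → ℕ → ℕ → List ℕ → Option (List ℕ)
  | 0, _, _, _ => none
  | _ + 1, _, _, [] => none
  | f + 1, B, R, e :: l =>
    bif adjm (e / 16) (e % 16) then
      match (bif Nat.beq (common (ins B (e / 16) (e % 16)) (e / 16) (e % 16)) 0 then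
          search f (ins B (e / 16) (e % 16)) R l else some l) with
      | none => none
      | some l' =>
        bif edgeIn (ins R (e / 16) (e % 16))
            (common (ins R (e / 16) (e % 16)) (e / 16) (e % 16)) 16 then some l'
        else search f B (ins R (e / 16) (e % 16)) l'
    else none


/-- `w` is blue to an edge of the first cycle and to an edge of the second one. -/
def blueEEOrder : List ℕ := [
  18, 22, 38, 23, 39, 103]

theorem blueEE_run :
    (search 110 (insAll 0 [1, 2, 6, 7]) (insAll 0 [])
      blueEEOrder).isSome = true := by
  decide +kernel

/-- `w` is blue to an edge of the first cycle and to a vertex of each of the other two. -/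
def blueEVVOrder : List ℕ := [
  18, 22, 38, 27, 43, 107]

theorem blueEVV_run :
    (search 110 (insAll 0 [1, 2, 6, 11]) (insAll 0 [])
      blueEVVOrder).isSome = true := by
  decide +kernel

/-- `w` is red to an edge of each cycle. -/
def redEEEOrder : List ℕ := [
  18, 22, 38, 27, 43, 107, 28, 44, 108, 188, 23, 39, 103, 123, 124, 103, 27, 43, 28, 44, 188, 108,
  124, 23, 39, 123, 107, 123, 23, 39, 28, 44, 124, 108, 188, 23, 39, 27, 43, 123, 107, 28, 44,
  124, 108, 188, 22, 39, 27, 107, 28, 108, 188, 44, 124, 23, 103, 123, 43, 123, 23, 103, 28, 108,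
  124, 44, 188, 23, 103, 27, 107, 123, 43, 28, 108, 124, 44, 188, 38, 23, 27, 123, 28, 124, 188,
  44, 108, 43, 107, 39, 103]

theorem redEEE_run :
    (search 110 (insAll 0 []) (insAll 0 [1, 2, 6, 7, 11, 12])
      redEEEOrder).isSome = true := by
  decide +kernel

/-- `w` is red to a vertex of the first cycle, to the whole second cycle and to an edge of the third. -/
def redVCEOrder : List ℕ := [
  188, 27, 28, 107, 22, 108, 123, 23, 124, 103, 139, 24, 140, 120, 155, 25, 156, 137, 26, 171,
  106, 154, 22, 25, 108, 156, 124, 140, 23, 24, 172, 171, 106, 154, 108, 156, 22, 25, 23, 24, 124,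
  140, 22, 123, 124, 171, 172, 139, 120, 140, 24, 25, 137, 155, 154, 156, 155, 154, 156, 26, 106,
  107, 103, 108, 23, 103, 107, 108, 124, 28, 139, 140, 155, 137, 156, 25, 26, 106, 154, 172, 171,
  171, 172, 24, 120, 107, 108, 28, 23, 124, 103, 123, 139, 140, 120, 24, 25, 156, 26, 154, 172,
  106, 171, 137, 155, 24, 120, 103, 123, 27, 108, 123, 23, 171, 26, 139, 24, 120, 140, 25, 155,
  137, 156, 154, 155, 137, 156, 172, 106, 107, 22, 103, 124, 103, 107, 22, 23, 28, 24, 120, 139,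
  140, 25, 155, 26, 154, 171, 106, 172, 137, 156, 107, 22, 28, 103, 123, 124, 23, 106, 171, 172,
  26, 120, 140, 139, 24, 25, 155, 156, 137, 154, 155, 156, 24, 139, 26, 172, 23, 124, 28, 107,
  123, 103, 139, 120, 155, 137, 26, 172, 171, 106, 154, 108, 156, 22, 25, 23, 24, 124, 140, 171,
  106, 154, 22, 25, 108, 156, 124, 140, 23, 24, 25, 156, 24, 140, 23, 124, 22, 108]

theorem redVCE_run :
    (search 110 (insAll 0 []) (insAll 0 [1, 6, 7, 8, 9, 10, 11, 12])
      redVCEOrder).isSome = true := by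
  decide +kernel

/-- Main configuration, second cycle not monochromatic. -/
def mainBOrder : List ℕ := [
  18, 35, 52, 21, 69, 11, 27, 43, 59, 75, 91, 13, 29, 45, 61, 77, 93, 142, 127, 111, 126, 110,
  239, 123, 107, 191, 23, 22, 31, 39, 38, 47, 55, 54, 63, 71, 70, 79, 87, 86, 95, 24, 30, 46, 94,
  40, 88, 56, 72, 62, 78, 40, 88, 46, 94, 62, 78, 56, 72, 23, 22, 31, 39, 38, 47, 55, 54, 63, 70,
  71, 87, 86, 95, 79, 71, 87, 86, 95, 39, 87, 38, 47, 86, 95, 54, 55, 71, 70, 79, 63, 55, 71, 70,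
  79, 143, 239, 126, 110, 111, 222, 125, 141, 23, 22, 30, 38, 39, 47, 55, 40, 62, 46, 31, 63, 24,
  56, 88, 72, 94, 95, 78, 79, 46, 39, 40, 39, 87, 24, 46, 94, 30, 31, 47, 95, 40, 88, 56, 72, 62,
  63, 78, 79, 23, 22, 30, 46, 94, 109, 39, 87, 125, 55, 71, 54, 62, 70, 78, 46, 39, 40, 123, 24,
  107, 30, 31, 94, 47, 87, 38, 95, 54, 86, 55, 63, 70, 71, 79, 62, 55, 38, 39, 47, 123, 31, 63,
  107, 22, 54, 86, 70, 87, 95, 71, 79, 109, 125, 87, 71, 86, 94, 70, 78, 126, 110, 127, 111, 239,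
  143, 125, 109, 222, 23, 22, 30, 39, 38, 46, 55, 54, 62, 71, 70, 78, 87, 86, 94, 24, 31, 47, 95,
  40, 88, 56, 72, 63, 79, 40, 88, 47, 95, 63, 79, 56, 72, 23, 22, 30, 39, 38, 46, 55, 54, 62, 70,
  71, 87, 86, 94, 107, 78, 123, 71, 87, 86, 94, 39, 87, 38, 46, 86, 94, 54, 55, 71, 70, 78, 107,
  62, 123, 55, 71, 70, 78, 141, 126, 110, 124, 108, 125, 109, 205, 123, 107, 188, 23, 22, 28, 39,
  38, 44, 55, 54, 60, 71, 70, 76, 87, 86, 92, 24, 29, 45, 93, 40, 88, 56, 72, 61, 77, 40, 88, 45,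
  93, 61, 77, 56, 72, 23, 22, 28, 39, 38, 44, 55, 54, 60, 70, 71, 87, 86, 92, 76, 71, 87, 86, 92,
  39, 87, 38, 44, 86, 92, 54, 55, 71, 70, 76, 60, 55, 71, 70, 76, 140, 205, 125, 109, 222, 142,
  222, 125, 109, 110, 108, 124, 140, 205, 127, 111, 173, 137, 156, 157, 175, 123, 107, 191, 31,
  23, 26, 38, 39, 44, 28, 22, 24, 86, 40, 87, 92, 47, 143, 42, 159, 25, 41, 154, 63, 55, 60, 54,
  70, 71, 76, 22, 47, 28, 39, 42, 44, 40, 24, 143, 159, 25, 41, 154, 47, 95, 22, 39, 87, 23, 28,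
  44, 92, 38, 86, 54, 70, 55, 60, 71, 76, 22, 23, 28, 39, 87, 188, 38, 86, 107, 54, 70, 55, 71,
  55, 54, 61, 70, 71, 76, 87, 188, 86, 107, 77, 71, 87, 86, 93, 29, 23, 39, 38, 45, 39, 71, 38,
  45, 70, 77, 29, 23, 87, 86, 93, 106, 174, 239, 143, 159, 158, 154, 157, 106, 172, 143, 239, 205,
  124, 140, 125, 109, 126, 110, 222, 142, 127, 111, 124, 108, 205, 140, 123, 107, 191, 23, 22, 31,
  39, 38, 47, 55, 54, 63, 71, 70, 79, 87, 86, 95, 24, 28, 44, 92, 40, 88, 56, 72, 60, 76, 40, 88,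
  44, 92, 60, 76, 56, 72, 23, 22, 29, 39, 38, 45, 55, 54, 61, 70, 71, 87, 86, 93, 77, 71, 87, 86,
  93, 39, 87, 38, 45, 86, 93, 54, 55, 71, 70, 77, 61, 55, 71, 70, 77, 143, 239, 13, 29, 45, 61,
  77, 93, 139, 127, 111, 124, 108, 123, 107, 188, 125, 109, 205, 23, 22, 28, 39, 38, 44, 55, 54,
  60, 71, 70, 76, 87, 86, 92, 24, 27, 43, 91, 40, 88, 56, 72, 59, 75, 40, 88, 43, 91, 59, 75, 56,
  72, 23, 22, 28, 39, 38, 44, 55, 54, 60, 70, 71, 87, 86, 92, 76, 71, 87, 86, 92, 39, 87, 38, 44,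
  86, 92, 54, 55, 71, 70, 76, 60, 55, 71, 70, 76, 140, 188, 123, 107, 191, 143, 191, 123, 107,
  111, 108, 124, 140, 188, 126, 110, 171, 137, 155, 156, 174, 125, 109, 222, 30, 23, 26, 38, 39,
  44, 28, 22, 24, 86, 40, 87, 92, 46, 142, 42, 158, 25, 41, 154, 62, 55, 60, 54, 70, 71, 76, 22,
  46, 28, 39, 42, 44, 40, 24, 142, 158, 25, 41, 154, 46, 94, 22, 39, 87, 23, 28, 44, 92, 38, 86,
  54, 70, 55, 60, 71, 76, 22, 23, 28, 39, 87, 205, 38, 86, 109, 54, 70, 55, 71, 55, 54, 59, 70,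
  71, 76, 87, 205, 86, 109, 75, 71, 87, 86, 91, 27, 23, 39, 38, 43, 39, 71, 38, 43, 70, 75, 27,
  23, 87, 86, 91, 106, 175, 239, 142, 158, 159, 154, 155, 106, 172, 142, 239, 188, 124, 140, 123,
  107, 127, 111, 191, 143, 126, 110, 124, 108, 188, 140, 125, 109, 222, 23, 22, 30, 39, 38, 46,
  55, 54, 62, 71, 70, 78, 87, 86, 94, 24, 28, 44, 92, 40, 88, 56, 72, 60, 76, 40, 88, 44, 92, 60,
  76, 56, 72, 23, 22, 27, 39, 38, 43, 55, 54, 59, 70, 71, 87, 86, 91, 75, 71, 87, 86, 91, 39, 87,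
  38, 43, 86, 91, 54, 55, 71, 70, 75, 59, 55, 71, 70, 75, 142, 239, 139, 124, 108, 127, 111, 125,
  109, 205, 141, 110, 126, 142, 222, 239, 126, 142, 222, 143, 191, 123, 107, 188, 140, 188, 123,
  107, 143, 191, 111, 127, 125, 109, 110, 126, 239, 222, 126, 142, 239, 141, 205, 127, 111, 191,
  123, 107, 124, 108, 188, 140, 125, 109, 126, 110, 222, 142, 111, 127, 143, 239, 191, 127, 143,
  239, 141, 205]

theorem mainB_run :
    (search 110 (insAll 0 [1, 2, 3, 4, 5, 103]) (insAll 0 [6, 7, 8, 9, 10, 12, 14, 15, 120])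
      mainBOrder).isSome = true := by
  decide +kernel

/-- Main configuration, third cycle not monochromatic (rotation 0). -/
def mainC0Order : List ℕ := [
  18, 35, 52, 21, 69, 13, 29, 45, 61, 77, 93, 28, 27, 60, 59, 108, 22, 54, 107, 70, 76, 92, 86,
  91, 75, 76, 92, 86, 91, 103, 106, 109, 125, 173, 124, 23, 55, 87, 71, 86, 92, 70, 76, 172, 26,
  58, 90, 74, 86, 92, 70, 76, 120, 154, 39, 40, 141, 74, 70, 73, 157, 137, 140, 24, 56, 139, 43,
  11, 155, 41, 25, 26, 90, 86, 89, 71, 72, 75, 88, 76, 92, 87, 76, 88, 72, 156, 25, 57, 155, 75,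
  76, 92, 89, 91, 57, 89, 58, 90, 42, 26, 41, 25, 58, 90, 76, 57, 89, 75, 41, 42, 26, 44, 25, 156,
  43, 157, 137, 140, 24, 139, 157, 137, 56, 140, 156, 73, 155, 24, 56, 23, 55, 87, 71, 88, 72, 23,
  55, 44, 24, 56, 43, 141, 156, 25, 41, 155, 40, 140, 137, 41, 157, 25, 57, 26, 58, 90, 74, 89,
  73, 139, 140, 137, 155, 157, 25, 26, 42, 90, 41, 89, 57, 73, 58, 74, 41, 89, 42, 90, 58, 74, 57,
  73, 88, 72, 87, 71, 156, 25, 57, 155, 73, 76, 92, 89, 91, 75, 11, 76, 171, 74, 140, 24, 56, 139,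
  72, 76, 92, 88, 91, 75, 11, 76, 123, 71, 38, 39, 42, 125, 173, 107, 43, 123, 23, 55, 22, 54, 86,
  70, 87, 91, 71, 75, 70, 71, 74, 124, 23, 55, 123, 75, 76, 92, 87, 91, 172, 26, 58, 171, 75, 76,
  92, 90, 91, 120, 141, 140, 24, 56, 88, 72, 87, 92, 76, 57, 156, 137, 154, 56, 157, 40, 72, 41,
  73, 25, 89, 24, 88, 156, 25, 155, 73, 76, 92, 89, 91, 75, 76, 92, 89, 91, 137, 154, 157, 41, 73,
  40, 72, 24, 88, 25, 89, 140, 24, 56, 139, 72, 76, 92, 88, 91, 75, 76, 92, 88, 91, 54, 86, 76,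
  55, 58, 87, 75, 111, 47, 63, 127, 110, 46, 62, 126, 239, 126, 222, 127, 78, 71, 79, 63, 95, 62,
  94, 46, 30, 47, 23, 31, 141, 120, 142, 222, 143, 78, 127, 79, 191, 123, 43, 71, 11, 124, 139,
  140, 140, 56, 72, 156, 57, 73, 155, 137, 43, 44, 40, 41, 157, 154, 172, 74, 171, 123, 171, 124,
  172, 120, 154, 139, 155, 157, 24, 25, 41, 89, 40, 88, 56, 72, 57, 73, 40, 88, 41, 89, 57, 73,
  56, 72, 26, 58, 22, 54, 86, 70, 90, 74, 23, 55, 22, 54, 86, 70, 87, 71, 22, 54, 44, 23, 26, 55,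
  58, 43, 140, 24, 40, 139, 156, 25, 41, 155, 137, 124, 39, 123, 120, 125, 141, 172, 42, 171, 154,
  74, 70, 73, 86, 90, 173, 157, 57, 89, 56, 88, 40, 24, 41, 25, 173, 157, 24, 25, 41, 89, 40, 88,
  56, 72, 57, 73, 40, 88, 41, 89, 57, 73, 56, 72, 87, 71, 86, 70, 172, 26, 58, 171, 74, 76, 92,
  90, 91, 75, 76, 92, 90, 91, 124, 23, 55, 123, 71, 76, 92, 87, 91, 75, 76, 92, 87, 91, 44, 43,
  108, 22, 38, 107, 124, 23, 39, 123, 103, 140, 24, 40, 139, 120, 156, 25, 41, 155, 137, 172, 26,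
  42, 171, 106, 154, 54, 55, 58, 125, 173, 141, 157, 56, 57, 109, 125, 173, 55, 58, 56, 57, 141,
  157, 44, 92, 43, 91, 108, 38, 86, 107, 54, 60, 76, 70, 75, 59, 60, 76, 70, 75, 103, 106, 109,
  125, 173, 124, 39, 87, 55, 71, 54, 60, 70, 76, 23, 22, 172, 42, 90, 58, 74, 54, 60, 70, 76, 26,
  123, 27, 107, 38, 86, 39, 87, 55, 71, 54, 59, 70, 75, 120, 24, 141, 171, 27, 107, 38, 86, 39,
  42, 87, 90, 55, 58, 71, 74, 54, 59, 70, 75, 154, 25, 157, 137, 55, 54, 56, 140, 40, 88, 139, 41,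
  89, 59, 42, 90, 60, 58, 74, 76, 57, 73, 72, 156, 41, 89, 155, 88, 87, 71, 70, 72, 57, 58, 60,
  59, 73, 60, 76, 39, 60, 40, 59, 41, 156, 140, 56, 139, 41, 156, 156, 41, 89, 155, 11, 59, 75,
  57, 73, 60, 76, 40, 140, 140, 40, 88, 139, 11, 59, 75, 56, 72, 60, 76, 22, 23, 26, 125, 173, 54,
  55, 58, 124, 39, 87, 123, 59, 60, 76, 71, 75, 139, 140, 120, 123, 141, 24, 27, 39, 87, 40, 86,
  88, 56, 70, 72, 59, 71, 75, 172, 42, 90, 171, 59, 60, 76, 74, 75, 155, 156, 154, 171, 157, 25,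
  27, 42, 90, 41, 86, 89, 57, 70, 73, 59, 74, 75, 11, 27, 59, 75, 140, 40, 88, 56, 72, 60, 76,
  120, 141, 24, 25, 137, 156, 41, 89, 57, 73, 60, 76, 41, 156, 154, 157, 137, 140, 40, 88, 156,
  154, 157, 25, 24, 141, 120, 87, 86, 70, 71, 56, 57, 60, 59, 72, 60, 76, 120, 141, 24, 25, 41,
  156, 154, 157, 157, 154, 156, 89, 90, 86, 70, 71, 74, 56, 57, 59, 73, 60, 76, 72, 60, 73, 57,
  38, 60, 39, 42, 59, 140, 40, 56, 139, 120, 141, 24, 156, 41, 57, 155, 137, 25, 157, 154, 172,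
  58, 171, 124, 55, 123, 42, 172, 39, 124, 172, 42, 90, 171, 58, 60, 76, 74, 75, 59, 60, 76, 74,
  75, 124, 39, 87, 123, 55, 60, 76, 71, 75, 59, 60, 76, 71, 75, 109, 124, 123, 172, 171, 156, 154,
  155, 11, 27, 43, 59, 75, 91, 28, 25, 26, 44, 41, 42, 60, 57, 58, 76, 73, 74, 92, 89, 90, 140,
  120, 139, 29, 23, 125, 141, 24, 40, 88, 45, 93, 61, 77, 56, 72, 39, 87, 24, 141, 125, 45, 93,
  103, 61, 77, 54, 55, 70, 71, 45, 93, 39, 125, 141, 40, 88, 56, 72, 61, 77, 55, 40, 141, 125, 61,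
  87, 77, 71, 141, 24, 29, 45, 93, 40, 88, 56, 72, 61, 77, 40, 88, 45, 93, 61, 77, 56, 72, 157,
  140, 120, 139, 11, 27, 43, 59, 75, 91, 28, 23, 24, 44, 39, 40, 60, 55, 56, 76, 71, 72, 92, 87,
  88, 25, 29, 45, 93, 41, 89, 57, 73, 61, 77, 41, 89, 45, 93, 61, 77, 57, 73, 137, 141, 173, 106,
  108, 103, 107, 11, 27, 43, 59, 75, 91, 23, 28, 54, 60, 61, 70, 76, 77, 86, 92, 93, 29, 22, 38,
  44, 45, 38, 70, 44, 45, 76, 77, 29, 22, 86, 92, 93, 39, 87, 22, 44, 92, 28, 29, 45, 93, 38, 86,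
  54, 70, 60, 61, 76, 77, 125, 103, 108, 107, 140, 139, 106, 172, 173, 11, 27, 43, 59, 75, 91,
  157, 172, 171, 26, 28, 54, 60, 61, 70, 76, 77, 86, 92, 93, 29, 22, 38, 44, 45, 38, 70, 44, 45,
  76, 77, 29, 22, 86, 92, 93, 42, 90, 22, 44, 92, 28, 29, 45, 93, 38, 86, 54, 70, 60, 61, 76, 77,
  173, 154, 156, 137, 155, 24, 28, 54, 60, 61, 70, 76, 77, 86, 92, 93, 29, 22, 38, 44, 45, 38, 70,
  44, 45, 76, 77, 29, 22, 86, 92, 93, 40, 88, 25, 44, 92, 28, 29, 45, 93, 38, 86, 54, 70, 60, 61,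
  76, 77, 156, 137, 155, 141, 25, 28, 54, 60, 61, 70, 76, 77, 86, 92, 93, 29, 22, 38, 44, 45, 38,
  70, 44, 45, 76, 77, 29, 22, 86, 92, 93, 41, 89, 24, 44, 92, 28, 29, 45, 93, 38, 86, 54, 70, 60,
  61, 76, 77, 171, 172, 173, 137, 156, 154, 157, 155, 154, 156, 120, 141, 108, 107, 125, 173, 156,
  155, 140, 137, 139, 11, 27, 43, 59, 75, 91, 28, 24, 25, 44, 40, 41, 60, 56, 57, 76, 72, 73, 92,
  88, 89, 29, 24, 141, 157, 25, 41, 89, 45, 93, 61, 77, 57, 73, 40, 88, 25, 157, 141, 45, 93, 120,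
  61, 77, 55, 56, 71, 72, 45, 93, 40, 141, 157, 41, 89, 57, 73, 61, 77, 56, 41, 157, 141, 61, 88,
  77, 72, 141, 120, 124, 103, 123, 11, 27, 43, 59, 75, 91, 22, 28, 38, 44, 55, 60, 61, 45, 39, 23,
  29, 70, 76, 77, 71, 87, 92, 93, 71, 76, 77, 39, 71, 45, 76, 77, 29, 23, 87, 92, 93, 54, 39, 60,
  44, 45, 29, 61, 23, 55, 87, 71, 92, 93, 76, 77, 38, 86, 23, 44, 92, 28, 29, 45, 93, 39, 87, 55,
  71, 60, 61, 76, 77, 157, 154, 172, 106, 171, 11, 27, 43, 59, 75, 91, 22, 28, 38, 44, 58, 60, 61,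
  45, 41, 25, 29, 70, 76, 77, 74, 90, 92, 93, 74, 76, 77, 42, 74, 45, 76, 77, 29, 26, 90, 92, 93,
  54, 42, 60, 44, 45, 29, 61, 26, 58, 90, 74, 92, 93, 76, 77, 38, 86, 26, 44, 92, 28, 29, 45, 93,
  42, 90, 58, 74, 60, 61, 76, 77, 106, 172, 103, 124]

theorem mainC0_run :
    (search 110 (insAll 0 [1, 2, 3, 4, 5, 188]) (insAll 0 [6, 7, 8, 9, 10, 12, 14, 15, 205])
      mainC0Order).isSome = true := by
  decide +kernel

/-- Main configuration, third cycle not monochromatic (rotation 1). -/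
def mainC1Order : List ℕ := [
  18, 35, 52, 21, 69, 13, 29, 45, 61, 77, 93, 11, 27, 43, 59, 75, 91, 30, 62, 239, 31, 63, 191,
  110, 22, 54, 111, 70, 78, 94, 86, 95, 79, 78, 94, 86, 95, 103, 106, 109, 125, 173, 126, 23, 55,
  87, 71, 86, 94, 70, 78, 174, 26, 58, 90, 74, 86, 94, 70, 78, 120, 154, 39, 38, 40, 107, 123,
  171, 111, 46, 47, 22, 54, 23, 26, 55, 58, 87, 90, 71, 74, 88, 89, 72, 73, 139, 137, 155, 42, 41,
  71, 72, 87, 88, 139, 141, 143, 140, 25, 158, 157, 137, 156, 155, 137, 159, 23, 94, 22, 24, 95,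
  139, 86, 90, 26, 25, 137, 155, 55, 78, 54, 56, 79, 139, 70, 74, 58, 57, 137, 155, 22, 54, 23,
  55, 87, 71, 86, 70, 23, 55, 46, 22, 24, 54, 56, 47, 70, 71, 74, 87, 90, 86, 88, 89, 107, 139,
  171, 111, 38, 42, 26, 25, 137, 155, 107, 171, 111, 38, 79, 42, 78, 58, 71, 74, 57, 72, 73, 139,
  137, 155, 158, 25, 159, 175, 111, 171, 41, 46, 39, 42, 38, 47, 22, 54, 23, 26, 55, 58, 87, 90,
  71, 74, 86, 95, 70, 79, 47, 42, 46, 142, 24, 143, 127, 111, 123, 39, 38, 47, 22, 54, 23, 55, 87,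
  71, 86, 95, 70, 79, 46, 40, 47, 38, 39, 42, 123, 107, 127, 120, 139, 171, 175, 154, 155, 70, 71,
  74, 79, 78, 94, 95, 22, 23, 26, 87, 90, 88, 89, 24, 25, 137, 86, 87, 90, 23, 26, 24, 25, 40, 41,
  137, 55, 58, 56, 57, 40, 41, 137, 54, 78, 55, 58, 79, 71, 74, 72, 73, 56, 57, 137, 159, 158,
  174, 26, 173, 47, 172, 41, 46, 156, 157, 26, 58, 22, 54, 86, 70, 90, 74, 143, 142, 126, 23, 125,
  47, 124, 40, 46, 140, 141, 23, 55, 22, 54, 86, 70, 87, 71, 22, 54, 46, 23, 26, 55, 47, 123, 127,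
  39, 126, 142, 24, 40, 143, 120, 40, 139, 24, 158, 25, 41, 159, 137, 25, 42, 174, 154, 41, 155,
  159, 171, 175, 87, 71, 86, 70, 174, 26, 58, 175, 111, 127, 107, 70, 79, 74, 78, 94, 90, 95, 54,
  86, 55, 87, 95, 23, 22, 38, 39, 47, 126, 23, 55, 127, 111, 107, 70, 79, 71, 78, 94, 87, 95, 86,
  95, 87, 94, 78, 71, 79, 95, 79, 94, 78, 110, 22, 54, 109, 108, 126, 23, 55, 103, 124, 125, 87,
  71, 94, 78, 127, 142, 24, 56, 174, 26, 58, 106, 172, 173, 90, 74, 94, 78, 175, 158, 25, 57, 137,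
  72, 78, 94, 88, 89, 73, 78, 94, 88, 89, 154, 159, 120, 143, 86, 70, 94, 78, 111, 126, 23, 55,
  174, 26, 58, 125, 124, 142, 24, 56, 120, 140, 141, 88, 72, 94, 78, 143, 158, 25, 57, 154, 73,
  78, 94, 89, 90, 74, 78, 94, 89, 90, 137, 159, 87, 71, 94, 78, 106, 175, 103, 127, 46, 78, 110,
  22, 38, 70, 107, 109, 108, 125, 103, 124, 126, 23, 39, 55, 239, 31, 47, 111, 127, 63, 120, 56,
  143, 142, 24, 40, 72, 139, 47, 79, 123, 39, 71, 23, 87, 31, 88, 95, 142, 24, 40, 139, 141, 140,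
  124, 60, 106, 171, 173, 174, 175, 58, 111, 54, 44, 76, 79, 39, 71, 74, 23, 87, 90, 28, 92, 86,
  172, 173, 137, 155, 157, 158, 159, 57, 143, 56, 44, 47, 42, 41, 26, 25, 154, 156, 154, 157, 23,
  28, 44, 41, 42, 39, 44, 28, 25, 26, 103, 239, 31, 47, 174, 26, 42, 175, 106, 158, 25, 41, 159,
  154, 142, 24, 40, 143, 137, 126, 23, 39, 127, 120, 54, 55, 58, 125, 173, 141, 157, 56, 57, 109,
  125, 173, 55, 58, 56, 57, 141, 157, 111, 127, 126, 23, 39, 71, 123, 125, 107, 109, 54, 55, 63,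
  47, 79, 38, 70, 22, 86, 31, 87, 95, 126, 23, 39, 71, 123, 125, 124, 108, 109, 54, 60, 120, 141,
  142, 56, 55, 44, 76, 38, 70, 22, 86, 28, 92, 87, 88, 94, 140, 141, 127, 191, 239, 111, 63, 47,
  79, 38, 70, 22, 86, 31, 95, 111, 174, 26, 42, 173, 172, 154, 157, 158, 57, 58, 44, 40, 24, 56,
  142, 137, 156, 137, 157, 22, 28, 44, 40, 41, 38, 44, 28, 24, 25, 106, 175, 239, 31, 47, 46, 94,
  110, 38, 86, 109, 108, 125, 103, 124, 126, 39, 87, 55, 71, 62, 78, 23, 173, 106, 172, 174, 42,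
  90, 58, 74, 62, 78, 26, 107, 123, 103, 124, 28, 188, 44, 92, 39, 87, 55, 71, 60, 76, 111, 191,
  239, 127, 31, 47, 95, 39, 87, 55, 71, 63, 79, 120, 24, 239, 47, 95, 54, 62, 78, 70, 79, 63, 62,
  78, 70, 79, 127, 31, 143, 142, 40, 88, 47, 95, 39, 87, 55, 71, 56, 63, 72, 79, 142, 40, 88, 141,
  140, 158, 41, 89, 137, 156, 157, 57, 73, 62, 78, 154, 25, 157, 137, 156, 56, 72, 62, 78, 54, 70,
  62, 78, 54, 70, 62, 78, 103, 239, 47, 95, 191, 106, 109, 125, 173, 126, 39, 87, 55, 71, 54, 62,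
  70, 78, 23, 22, 120, 24, 107, 123, 171, 111, 174, 42, 90, 58, 74, 54, 62, 70, 78, 26, 154, 25,
  55, 56, 71, 72, 139, 141, 143, 140, 41, 158, 157, 137, 156, 155, 137, 159, 87, 78, 86, 88, 79,
  139, 70, 74, 90, 89, 137, 155, 39, 62, 38, 40, 63, 139, 54, 58, 42, 41, 137, 155, 158, 159, 175,
  31, 38, 86, 39, 42, 87, 90, 55, 58, 71, 74, 54, 63, 70, 79, 38, 86, 39, 87, 55, 71, 54, 70, 142,
  143, 127, 31, 111, 123, 38, 86, 39, 87, 55, 71, 54, 63, 70, 79, 22, 23, 26, 123, 107, 127, 120,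
  139, 125, 141, 142, 40, 88, 126, 56, 72, 55, 62, 71, 78, 24, 137, 25, 54, 58, 70, 74, 171, 173,
  175, 172, 41, 158, 157, 154, 156, 155, 154, 159, 86, 78, 87, 90, 79, 171, 71, 72, 88, 89, 154,
  155, 38, 62, 39, 42, 63, 171, 55, 56, 40, 41, 154, 155, 158, 159, 143, 31, 39, 87, 38, 40, 86,
  88, 54, 56, 70, 72, 55, 63, 71, 79, 39, 126, 143, 142, 126, 39, 125, 31, 124, 24, 140, 141, 39,
  87, 38, 86, 54, 70, 55, 71, 174, 175, 111, 127, 107, 22, 23, 31, 39, 87, 38, 86, 54, 70, 55, 63,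
  71, 79, 38, 86, 109, 39, 87, 125, 55, 71, 54, 70, 63, 79, 62, 78, 111, 127, 126, 39, 87, 22, 23,
  31, 123, 47, 95, 107, 38, 86, 54, 70, 55, 63, 71, 79, 109, 125, 55, 71, 54, 62, 70, 78, 126, 39,
  87, 124, 125, 55, 71, 62, 78, 108, 109, 22, 28, 111, 31, 174, 42, 90, 191, 107, 141, 140, 120,
  125, 142, 55, 71, 56, 62, 72, 78, 120, 142, 24, 23, 123, 44, 92, 139, 127, 38, 86, 47, 95, 54,
  70, 239, 60, 76, 143, 40, 88, 56, 72, 55, 71, 140, 127, 123, 55, 71, 62, 78, 143, 139, 173, 172,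
  154, 157, 158, 25, 26, 171, 44, 155, 175, 40, 47, 24, 239, 137, 159, 41, 156, 137, 157, 40, 44,
  142, 188, 158, 155, 41, 89, 57, 73, 62, 78, 56, 41, 60, 44, 158, 55, 142, 62, 88, 78, 72, 58,
  74, 62, 78, 47, 95, 38, 86, 54, 70, 63, 79, 106, 26, 172, 175, 239, 47, 95, 42, 191, 90, 38,
  107, 86, 54, 70, 58, 60, 74, 76, 127, 239, 30, 62, 188, 191, 110, 22, 54, 109, 108, 125, 103,
  124, 173, 106, 172, 126, 23, 55, 87, 71, 94, 78, 174, 26, 58, 90, 74, 94, 78, 111, 107, 239,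
  127, 103, 123, 239, 31, 63, 70, 78, 94, 86, 95, 79, 78, 94, 86, 95, 127, 175, 123, 171, 143,
  120, 139, 142, 137, 158, 154, 159, 159, 154, 155, 86, 70, 94, 78, 103, 239, 31, 63, 106, 109,
  125, 173, 108, 126, 23, 55, 87, 71, 86, 94, 70, 78, 174, 26, 58, 90, 74, 86, 94, 70, 78, 120,
  154, 39, 40, 141, 140, 137, 157, 25, 26, 42, 90, 41, 89, 57, 73, 58, 74, 41, 89, 42, 90, 58, 74,
  57, 73, 156, 155, 157, 139, 143, 159, 158, 142, 24, 47, 41, 46, 24, 56, 23, 55, 87, 71, 88, 72,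
  23, 55, 46, 24, 56, 47, 141, 140, 137, 157, 25, 26, 42, 90, 41, 89, 57, 73, 58, 74, 41, 89, 42,
  90, 58, 74, 57, 73, 156, 155, 139, 143, 159, 40, 158, 142, 88, 72, 87, 71, 158, 25, 159, 175,
  111, 171, 155, 156, 172, 41, 46, 39, 42, 38, 47, 22, 54, 23, 26, 55, 58, 87, 90, 71, 74, 86, 92,
  70, 76, 47, 42, 46, 142, 24, 143, 127, 111, 123, 139, 140, 124, 39, 38, 47, 22, 54, 23, 55, 87,
  71, 86, 92, 70, 76, 46, 40, 47, 38, 39, 42, 125, 124, 120, 141, 142, 24, 56, 126, 88, 72, 87,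
  94, 71, 78, 173, 172, 154, 157, 25, 158, 137, 24, 40, 88, 41, 89, 57, 73, 56, 72, 41, 89, 40,
  137, 158, 57, 94, 73, 78, 56, 46, 158, 137, 57, 88, 73, 72, 156, 155, 157, 171, 175, 159, 158,
  174, 26, 47, 41, 46, 26, 58, 22, 54, 86, 70, 90, 74, 140, 139, 141, 123, 127, 143, 142, 126, 23,
  47, 40, 46, 23, 55, 22, 54, 86, 70, 87, 71, 22, 54, 46, 23, 26, 55, 58, 47, 125, 124, 120, 141,
  173, 172, 154, 157, 142, 24, 40, 25, 158, 137, 24, 40, 88, 41, 89, 57, 73, 56, 72, 41, 89, 158,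
  137, 40, 88, 56, 72, 57, 73, 156, 155, 171, 175, 159, 42, 158, 174, 90, 74, 86, 70, 140, 139,
  123, 127, 143, 39, 142, 126, 87, 71, 86, 70, 174, 26, 175, 111, 127, 107, 171, 172, 108, 124,
  109, 38, 39, 47, 23, 55, 22, 54, 86, 70, 87, 92, 71, 76, 46, 42, 47, 111, 127, 126, 23, 55, 39,
  38, 46, 109, 125, 87, 71, 86, 94, 70, 78, 125, 109, 70, 71, 79, 63, 54, 38, 47, 31, 22, 86, 87,
  95, 54, 86, 63, 87, 95, 47, 31, 38, 22, 126, 23, 55, 107, 111, 127, 239, 123, 124, 127, 108,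
  111, 109, 141, 140, 120, 139, 125, 87, 71, 88, 91, 72, 75, 142, 24, 56, 88, 72, 94, 78, 26, 174,
  106, 22, 175, 86, 239, 95, 31, 63, 87, 94, 78, 71, 79, 175, 106, 171, 172, 106, 171, 139, 120,
  140, 137, 239, 31, 63, 38, 47, 39, 46, 40, 120, 41, 140, 143, 156, 159, 25, 57, 24, 56, 88, 72,
  89, 92, 73, 76, 46, 39, 47, 143, 174, 159, 154, 158, 155, 158, 156, 154, 171, 174, 106, 239, 31,
  38, 42, 47, 46, 39, 47, 111, 123, 124, 171, 172, 139, 120, 140, 143, 137, 159, 155, 154, 156,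
  155, 154, 156, 175, 106, 107, 103, 108, 127, 103, 107, 108, 124, 125, 175, 106, 172, 171, 173,
  126, 23, 55, 87, 71, 94, 78, 110, 239, 158, 120, 140, 143, 142, 137, 156, 154, 155, 139, 142,
  140, 137, 156, 154, 155, 159, 154, 174, 26, 58, 90, 74, 94, 78, 171, 106, 172, 107, 108, 123,
  103, 124, 127, 139, 140, 155, 137, 156, 159, 106, 171, 154, 175, 172, 175, 171, 154, 120, 143,
  108, 109, 110, 22, 54, 86, 70, 94, 78, 124, 103, 125, 126, 23, 55, 87, 71, 94, 78, 123, 140,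
  141, 172, 106, 173, 174, 26, 58, 90, 74, 94, 78, 171, 156, 137, 157, 24, 142, 158, 25, 57, 89,
  73, 94, 78, 88, 25, 158, 142, 56, 94, 72, 78, 154, 155, 120, 139, 107, 124, 125, 172, 173, 126,
  23, 55, 87, 71, 94, 78, 140, 120, 141, 142, 24, 56, 88, 72, 94, 78, 139, 156, 154, 157, 25, 158,
  174, 26, 58, 90, 74, 94, 78, 89, 26, 174, 158, 57, 94, 73, 78, 137, 155, 106, 171, 103, 123, 46,
  78, 110, 22, 38, 70, 109, 108, 125, 103, 124, 126, 23, 39, 55, 239, 31, 47, 111, 127, 63, 120,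
  56, 143, 142, 24, 40, 72, 47, 79, 39, 71, 23, 87, 31, 88, 95, 142, 24, 40, 141, 140, 124, 60,
  106, 173, 174, 175, 58, 111, 54, 44, 76, 79, 39, 71, 74, 23, 87, 90, 28, 92, 86, 172, 173, 137,
  157, 158, 159, 57, 143, 56, 44, 47, 42, 41, 26, 25, 154, 156, 154, 157, 23, 28, 44, 41, 42, 39,
  44, 28, 25, 26, 103, 239, 31, 47, 174, 26, 42, 175, 106, 158, 25, 41, 159, 154, 142, 24, 40,
  143, 137, 126, 23, 39, 127, 120, 54, 55, 58, 125, 173, 141, 157, 56, 57, 109, 125, 173, 55, 58,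
  56, 57, 141, 157, 111, 127, 126, 23, 39, 71, 125, 109, 54, 55, 63, 47, 79, 38, 70, 22, 86, 31,
  87, 95, 126, 23, 39, 71, 125, 124, 108, 109, 54, 60, 120, 141, 142, 56, 55, 44, 76, 38, 70, 22,
  86, 28, 92, 87, 88, 94, 140, 141, 239, 31, 47, 127, 111, 63, 106, 58, 172, 175, 174, 26, 42, 74,
  44, 76, 38, 70, 22, 86, 28, 90, 92, 174, 26, 42, 173, 172, 154, 157, 158, 159, 57, 175, 58, 44,
  47, 40, 41, 24, 25, 137, 156, 137, 157, 22, 28, 44, 40, 41, 38, 44, 28, 24, 25, 46, 94, 108,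
  109, 110, 38, 86, 54, 70, 62, 78, 22, 28, 124, 103, 125, 126, 39, 87, 55, 71, 62, 78, 172, 106,
  173, 174, 42, 90, 58, 74, 62, 78, 103, 23, 38, 39, 44, 54, 55, 60, 70, 71, 76, 86, 87, 92, 126,
  39, 87, 141, 140, 120, 125, 142, 55, 71, 56, 62, 72, 78, 142, 40, 88, 56, 72, 62, 78, 24, 143,
  31, 158, 41, 89, 57, 62, 78, 73, 157, 156, 154, 58, 173, 174, 157, 156, 154, 173, 174, 106, 26,
  137, 25, 159, 239, 47, 95, 41, 89, 40, 88, 56, 72, 57, 63, 73, 79, 239, 47, 127, 111, 120, 31,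
  23, 103, 106, 109, 125, 173, 126, 39, 87, 110, 55, 71, 54, 62, 70, 78, 23, 22, 239, 47, 95, 120,
  24, 174, 42, 90, 110, 58, 74, 54, 62, 70, 78, 26, 154, 25, 141, 140, 41, 158, 157, 137, 156,
  157, 137, 156, 40, 142, 158, 159, 175, 31, 111, 38, 86, 39, 42, 87, 90, 55, 58, 71, 74, 54, 63,
  70, 79, 142, 143, 127, 31, 111, 38, 86, 39, 87, 55, 71, 54, 63, 70, 79, 127, 31, 111, 110, 38,
  86, 47, 95, 39, 87, 55, 71, 54, 63, 70, 79, 110, 38, 86, 126, 54, 70, 55, 62, 71, 78, 22, 23,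
  26, 239, 47, 95, 125, 124, 141, 120, 140, 142, 40, 88, 56, 72, 62, 78, 24, 120, 137, 25, 157,
  156, 42, 174, 173, 154, 172, 173, 154, 172, 41, 158, 158, 159, 143, 31, 127, 39, 87, 38, 40, 86,
  88, 54, 56, 70, 72, 55, 63, 71, 79, 126, 39, 127, 143, 31, 39, 126, 111, 31, 127, 126, 39, 87,
  47, 95, 38, 86, 54, 70, 55, 63, 71, 79, 172, 173, 174, 42, 90, 58, 74, 62, 78, 110, 26, 38, 86,
  126, 28, 54, 55, 62, 78, 125, 70, 109, 109, 125, 23, 22, 44, 92, 42, 90, 58, 74, 60, 76, 70, 71,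
  78, 124, 125, 126, 39, 87, 55, 71, 62, 78, 110, 23, 38, 86, 173, 172, 106, 109, 174, 54, 70, 58,
  62, 74, 78, 174, 42, 90, 58, 74, 62, 78, 26, 175, 31, 158, 41, 89, 157, 156, 120, 24, 140, 137,
  141, 142, 142, 40, 88, 137, 140, 141, 56, 72, 62, 78, 57, 73, 62, 78, 154, 25, 159, 239, 47, 95,
  41, 89, 42, 90, 58, 74, 57, 63, 73, 79, 239, 47, 111, 127, 106, 31, 22, 110, 125, 124, 173, 172,
  141, 120, 140, 142, 137, 158, 157, 154, 156, 157, 154, 156, 174, 106, 109, 103, 108, 126, 103,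
  109, 108, 106, 173, 174, 172, 173, 174, 141, 140, 137, 157, 154, 158, 156, 154, 157, 120, 142,
  109, 108, 125, 103, 124, 126, 141, 140, 157, 137, 156, 158, 106, 173, 154, 174, 172, 174, 173,
  154, 120, 142]

theorem mainC1_run :
    (search 110 (insAll 0 [1, 2, 3, 4, 5, 205]) (insAll 0 [6, 7, 8, 9, 10, 12, 14, 15, 222])
      mainC1Order).isSome = true := by
  decide +kernel

/-- Main configuration, third cycle not monochromatic (rotation 2). -/
def mainC2Order : List ℕ := [
  18, 35, 52, 21, 69, 111, 126, 125, 174, 173, 158, 154, 157, 13, 29, 45, 61, 77, 93, 30, 25, 26,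
  46, 41, 42, 62, 57, 58, 78, 73, 74, 94, 89, 90, 142, 120, 141, 31, 23, 127, 143, 24, 40, 88, 47,
  95, 63, 79, 56, 72, 39, 87, 24, 143, 127, 47, 95, 103, 63, 79, 54, 55, 70, 71, 47, 95, 39, 127,
  143, 40, 88, 56, 72, 63, 79, 55, 40, 143, 127, 63, 87, 79, 71, 143, 24, 31, 47, 95, 40, 88, 56,
  72, 63, 79, 40, 88, 47, 95, 63, 79, 56, 72, 159, 142, 120, 141, 13, 29, 45, 61, 77, 93, 30, 23,
  24, 46, 39, 40, 62, 55, 56, 78, 71, 72, 94, 87, 88, 25, 31, 47, 95, 41, 89, 57, 73, 63, 79, 41,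
  89, 47, 95, 63, 79, 57, 73, 137, 143, 175, 106, 110, 103, 109, 13, 29, 45, 61, 77, 93, 23, 30,
  54, 62, 63, 70, 78, 79, 86, 94, 95, 31, 22, 38, 46, 47, 38, 70, 46, 47, 78, 79, 31, 22, 86, 94,
  95, 39, 87, 22, 46, 94, 30, 31, 47, 95, 38, 86, 54, 70, 62, 63, 78, 79, 127, 103, 110, 109, 142,
  141, 106, 174, 175, 173, 174, 175, 158, 137, 157, 13, 29, 45, 61, 77, 93, 30, 24, 25, 54, 62,
  63, 70, 78, 79, 86, 94, 95, 31, 22, 38, 46, 47, 38, 70, 46, 47, 78, 79, 31, 22, 86, 94, 95, 154,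
  159, 13, 29, 45, 61, 77, 93, 159, 30, 22, 24, 26, 174, 175, 154, 158, 25, 137, 157, 54, 62, 63,
  70, 78, 79, 86, 94, 95, 31, 22, 38, 46, 47, 38, 70, 46, 47, 78, 79, 31, 22, 86, 94, 95, 158,
  137, 157, 143, 24, 30, 31, 40, 46, 47, 41, 46, 47, 38, 42, 154, 175, 40, 25, 46, 47, 30, 31, 22,
  26, 154, 175, 120, 143, 110, 109, 127, 175, 158, 157, 142, 137, 141, 13, 29, 45, 61, 77, 93, 30,
  24, 25, 46, 40, 41, 62, 56, 57, 78, 72, 73, 94, 88, 89, 31, 24, 143, 159, 25, 41, 89, 47, 95,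
  63, 79, 57, 73, 40, 88, 25, 159, 143, 47, 95, 120, 63, 79, 55, 56, 71, 72, 47, 95, 40, 143, 159,
  41, 89, 57, 73, 63, 79, 56, 41, 159, 143, 63, 88, 79, 72, 143, 120, 126, 103, 125, 13, 29, 45,
  61, 77, 93, 22, 30, 55, 62, 63, 70, 78, 79, 71, 87, 94, 95, 31, 23, 39, 46, 47, 71, 78, 79, 39,
  71, 46, 47, 78, 79, 31, 23, 87, 94, 95, 38, 86, 23, 46, 94, 30, 31, 47, 95, 39, 87, 55, 71, 62,
  63, 78, 79, 159, 154, 174, 106, 173, 13, 29, 45, 61, 77, 93, 22, 30, 58, 62, 63, 70, 78, 79, 74,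
  90, 94, 95, 31, 26, 42, 46, 47, 74, 78, 79, 42, 74, 46, 47, 78, 79, 31, 26, 90, 94, 95, 38, 86,
  26, 46, 94, 30, 31, 47, 95, 42, 90, 58, 74, 62, 63, 78, 79, 106, 174, 103, 126]

theorem mainC2_run :
    (search 110 (insAll 0 [1, 2, 3, 4, 5, 222]) (insAll 0 [6, 7, 8, 9, 10, 12, 14, 15, 239])
      mainC2Order).isSome = true := by
  decide +kernel

/-- Main configuration, third cycle not monochromatic (rotation 3). -/
def mainC3Order : List ℕ := [
  18, 35, 52, 21, 69, 11, 27, 43, 59, 75, 91, 13, 29, 45, 61, 77, 93, 31, 30, 222, 63, 62, 111,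
  22, 54, 110, 70, 79, 95, 86, 94, 78, 79, 95, 86, 94, 103, 106, 107, 123, 171, 127, 23, 55, 87,
  71, 86, 95, 70, 79, 175, 26, 58, 90, 74, 86, 95, 70, 79, 120, 154, 39, 38, 40, 109, 110, 47, 46,
  22, 54, 23, 26, 55, 58, 87, 90, 71, 74, 88, 89, 72, 73, 139, 137, 155, 42, 41, 71, 72, 87, 88,
  139, 141, 142, 25, 26, 159, 90, 155, 89, 137, 158, 143, 73, 56, 78, 155, 157, 137, 158, 23, 95,
  22, 24, 94, 139, 86, 90, 26, 25, 137, 155, 55, 79, 54, 56, 78, 139, 70, 74, 58, 57, 137, 155,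
  22, 54, 23, 55, 87, 71, 86, 70, 23, 55, 47, 22, 24, 54, 56, 46, 70, 71, 74, 87, 90, 86, 88, 89,
  109, 139, 110, 38, 42, 26, 25, 137, 155, 109, 110, 38, 78, 42, 79, 58, 71, 74, 57, 72, 73, 139,
  137, 155, 159, 25, 158, 174, 110, 41, 47, 39, 42, 38, 46, 22, 54, 23, 26, 55, 58, 87, 90, 71,
  74, 86, 94, 70, 78, 46, 42, 47, 143, 24, 142, 126, 110, 39, 38, 46, 22, 54, 23, 55, 87, 71, 86,
  94, 70, 78, 47, 40, 46, 38, 39, 42, 125, 126, 173, 174, 141, 120, 142, 157, 154, 158, 143, 24,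
  56, 88, 72, 95, 79, 25, 159, 137, 24, 40, 88, 41, 89, 57, 73, 56, 72, 41, 89, 137, 40, 88, 56,
  72, 57, 73, 159, 57, 95, 73, 79, 26, 58, 22, 54, 86, 70, 90, 74, 23, 55, 22, 54, 86, 70, 87, 71,
  22, 54, 47, 23, 26, 55, 46, 125, 126, 39, 127, 120, 40, 141, 24, 143, 159, 25, 41, 158, 137, 25,
  42, 175, 154, 41, 157, 158, 173, 174, 142, 143, 87, 71, 86, 70, 175, 26, 58, 174, 110, 126, 109,
  70, 78, 74, 79, 95, 90, 94, 54, 86, 55, 87, 94, 23, 22, 38, 39, 46, 127, 23, 55, 126, 110, 109,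
  70, 78, 71, 79, 95, 87, 94, 86, 94, 87, 95, 79, 71, 78, 47, 46, 111, 22, 38, 110, 127, 23, 39,
  126, 103, 143, 24, 40, 142, 120, 159, 25, 41, 158, 137, 175, 26, 42, 174, 106, 154, 54, 55, 58,
  123, 171, 139, 155, 56, 57, 107, 123, 171, 55, 58, 56, 57, 139, 155, 46, 94, 47, 95, 63, 79, 62,
  78, 47, 95, 46, 94, 222, 111, 38, 86, 110, 54, 63, 79, 70, 78, 62, 63, 79, 70, 78, 103, 106,
  107, 123, 171, 127, 39, 87, 55, 71, 54, 63, 70, 79, 23, 22, 109, 110, 120, 24, 175, 42, 90, 58,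
  74, 54, 63, 70, 79, 26, 154, 25, 55, 56, 71, 72, 139, 141, 142, 41, 42, 159, 58, 155, 57, 137,
  158, 143, 73, 88, 78, 155, 157, 137, 158, 87, 79, 86, 88, 78, 139, 70, 74, 90, 89, 137, 155, 39,
  63, 38, 40, 62, 139, 54, 58, 42, 41, 137, 155, 159, 158, 174, 30, 38, 86, 39, 42, 87, 90, 55,
  58, 71, 74, 54, 62, 70, 78, 143, 142, 126, 30, 38, 86, 39, 87, 55, 71, 54, 62, 70, 78, 38, 86,
  39, 87, 55, 71, 54, 70, 22, 23, 26, 125, 126, 173, 174, 141, 120, 142, 157, 154, 158, 143, 40,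
  88, 56, 72, 63, 79, 159, 41, 89, 57, 73, 63, 79, 137, 24, 25, 41, 89, 40, 88, 56, 72, 57, 73,
  40, 88, 41, 89, 57, 73, 56, 72, 42, 90, 38, 86, 54, 70, 58, 74, 39, 87, 38, 86, 54, 70, 55, 71,
  175, 174, 110, 126, 109, 22, 23, 30, 39, 87, 38, 86, 54, 70, 55, 62, 71, 78, 38, 86, 107, 39,
  87, 123, 55, 71, 54, 70, 127, 39, 87, 126, 110, 109, 54, 62, 55, 63, 79, 71, 78, 70, 78, 71, 79,
  63, 55, 62, 62, 78, 63, 79, 31, 30, 63, 62, 111, 22, 54, 110, 70, 79, 95, 86, 94, 78, 79, 95,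
  86, 94, 103, 106, 107, 123, 171, 127, 23, 55, 87, 71, 86, 95, 70, 79, 175, 26, 58, 90, 74, 86,
  95, 70, 79, 120, 154, 39, 38, 40, 139, 126, 46, 110, 22, 54, 23, 55, 87, 71, 86, 94, 70, 78,
  222, 42, 41, 155, 137, 188, 140, 156, 74, 73, 25, 26, 159, 143, 142, 158, 157, 141, 28, 156,
  140, 205, 44, 172, 24, 23, 143, 87, 159, 88, 57, 158, 142, 78, 141, 72, 77, 157, 89, 93, 58, 79,
  57, 78, 56, 143, 159, 73, 158, 25, 57, 26, 58, 90, 74, 89, 73, 26, 58, 47, 25, 57, 46, 89, 90,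
  74, 95, 73, 159, 155, 137, 143, 24, 142, 155, 137, 23, 24, 41, 142, 159, 143, 87, 88, 24, 143,
  159, 41, 158, 125, 109, 141, 110, 142, 174, 173, 157, 137, 158, 24, 56, 23, 55, 87, 71, 88, 72,
  23, 55, 47, 24, 56, 46, 139, 159, 25, 41, 158, 40, 143, 137, 41, 155, 25, 57, 26, 58, 90, 74,
  89, 73, 142, 143, 137, 155, 25, 26, 42, 90, 41, 89, 57, 73, 58, 74, 41, 89, 42, 90, 58, 74, 57,
  73, 88, 72, 87, 71, 159, 25, 158, 174, 110, 41, 47, 39, 42, 38, 46, 22, 54, 23, 26, 55, 58, 87,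
  90, 71, 74, 86, 94, 70, 78, 46, 42, 47, 143, 24, 142, 126, 110, 39, 38, 46, 22, 54, 23, 55, 87,
  71, 86, 94, 70, 78, 47, 40, 46, 38, 39, 42, 123, 171, 70, 71, 74, 127, 23, 55, 126, 78, 79, 95,
  87, 94, 175, 26, 58, 174, 78, 79, 95, 90, 94, 120, 139, 143, 24, 56, 88, 72, 87, 95, 79, 57,
  159, 137, 154, 56, 155, 40, 72, 41, 73, 25, 89, 24, 88, 159, 25, 158, 73, 79, 95, 89, 94, 78,
  79, 95, 89, 94, 137, 154, 155, 41, 73, 40, 72, 24, 88, 25, 89, 143, 24, 56, 142, 72, 79, 95, 88,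
  94, 78, 79, 95, 88, 94, 54, 79, 55, 58, 78, 143, 56, 72, 142, 120, 139, 159, 57, 73, 158, 137,
  46, 47, 40, 41, 155, 154, 175, 74, 174, 174, 175, 154, 155, 24, 25, 41, 89, 40, 88, 56, 72, 57,
  73, 40, 88, 41, 89, 57, 73, 56, 72, 127, 71, 126, 26, 58, 22, 54, 86, 70, 90, 74, 23, 55, 22,
  54, 86, 70, 87, 71, 22, 54, 47, 23, 26, 55, 58, 46, 143, 24, 40, 142, 159, 25, 41, 158, 137,
  127, 39, 126, 120, 123, 139, 175, 42, 174, 154, 74, 70, 73, 86, 90, 171, 155, 57, 89, 56, 88,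
  40, 24, 41, 25, 171, 155, 24, 25, 41, 89, 40, 88, 56, 72, 57, 73, 40, 88, 41, 89, 57, 73, 56,
  72, 87, 71, 86, 70, 175, 26, 58, 174, 74, 79, 95, 90, 94, 78, 79, 95, 90, 94, 127, 23, 55, 126,
  71, 79, 95, 87, 94, 78, 79, 95, 87, 94, 47, 46, 111, 22, 38, 110, 127, 23, 39, 126, 103, 143,
  24, 40, 142, 120, 159, 25, 41, 158, 137, 175, 26, 42, 174, 106, 154, 54, 55, 58, 123, 171, 139,
  155, 56, 57, 107, 123, 171, 55, 58, 56, 57, 139, 155, 47, 95, 46, 94, 111, 38, 86, 110, 54, 63,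
  79, 70, 78, 62, 63, 79, 70, 78, 103, 106, 107, 123, 171, 127, 39, 87, 55, 71, 54, 63, 70, 79,
  23, 22, 120, 24, 175, 42, 90, 58, 74, 54, 63, 70, 79, 26, 154, 25, 139, 155, 137, 55, 54, 56,
  40, 143, 159, 41, 89, 158, 88, 87, 71, 70, 72, 57, 58, 63, 62, 73, 63, 79, 41, 42, 159, 58, 143,
  57, 88, 142, 89, 62, 90, 63, 74, 79, 73, 72, 39, 63, 40, 62, 41, 159, 143, 56, 142, 41, 159, 40,
  143, 159, 158, 174, 30, 110, 38, 86, 39, 42, 87, 90, 55, 58, 71, 74, 54, 62, 70, 78, 143, 142,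
  126, 30, 110, 38, 86, 39, 87, 55, 71, 54, 62, 70, 78, 22, 23, 26, 123, 171, 110, 30, 126, 39,
  87, 38, 86, 54, 70, 55, 62, 71, 78, 222, 143, 40, 88, 142, 56, 63, 79, 72, 78, 62, 63, 79, 72,
  78, 120, 139, 24, 137, 25, 155, 154, 188, 156, 172, 44, 41, 156, 159, 172, 175, 174, 158, 157,
  173, 205, 42, 172, 175, 156, 159, 158, 174, 173, 157, 205, 28, 108, 140, 38, 40, 42, 41, 41,
  159, 159, 158, 142, 30, 126, 39, 87, 38, 40, 86, 88, 54, 56, 70, 72, 55, 62, 71, 78, 127, 39,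
  87, 126, 54, 55, 62, 63, 79, 71, 78, 63, 55, 62, 109, 29, 125, 86, 87, 93, 70, 71, 77, 38, 39,
  45, 54, 55, 61, 42, 175, 39, 127, 175, 42, 90, 174, 58, 63, 79, 74, 78, 62, 63, 79, 74, 78, 127,
  39, 87, 126, 55, 63, 79, 71, 78, 62, 63, 79, 71, 78, 107, 127, 126, 175, 174, 143, 120, 142,
  139, 137, 155, 159, 154, 158, 159, 154, 158, 171, 106, 111, 103, 110, 123, 103, 111, 110, 106,
  171, 175, 174, 175, 171, 143, 142, 137, 159, 154, 155, 158, 154, 159, 120, 139, 111, 110, 127,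
  103, 126, 123, 143, 142, 159, 137, 158, 155, 106, 175, 154, 171, 171, 174, 154, 175, 120, 139]

theorem mainC3_run :
    (search 110 (insAll 0 [1, 2, 3, 4, 5, 239]) (insAll 0 [6, 7, 8, 9, 10, 12, 14, 15, 191])
      mainC3Order).isSome = true := by
  decide +kernel

/-- Main configuration, third cycle not monochromatic (rotation 4). -/
def mainC4Order : List ℕ := [
  18, 35, 52, 21, 69, 11, 27, 43, 59, 75, 91, 13, 29, 45, 61, 77, 93, 111, 107, 127, 103, 123,
  239, 110, 126, 31, 22, 23, 47, 38, 39, 63, 54, 55, 79, 70, 71, 95, 86, 87, 143, 120, 139, 159,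
  137, 155, 175, 106, 154, 171, 108, 22, 28, 44, 92, 38, 86, 54, 70, 60, 76, 38, 86, 44, 92, 60,
  76, 54, 70, 124, 172, 23, 28, 44, 39, 42, 40, 41, 140, 156, 39, 87, 44, 92, 60, 76, 55, 71, 174,
  26, 30, 46, 94, 42, 90, 58, 74, 62, 78, 42, 90, 46, 94, 62, 78, 58, 74, 158, 25, 30, 46, 94, 41,
  89, 57, 73, 62, 78, 41, 89, 46, 94, 62, 78, 57, 73, 142, 24, 30, 46, 94, 40, 88, 56, 72, 62, 78,
  40, 88, 46, 94, 62, 78, 56, 72, 120, 239, 110, 175, 106, 174, 154, 103, 22, 23, 31, 38, 39, 47,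
  54, 55, 63, 70, 71, 79, 86, 87, 95, 38, 86, 39, 47, 87, 95, 54, 55, 63, 70, 71, 79, 126, 142,
  137, 125, 141, 222, 24, 23, 25, 40, 39, 41, 155, 171, 159, 62, 55, 63, 47, 38, 46, 22, 30, 31,
  26, 106, 174, 90, 89, 95, 86, 94, 70, 78, 79, 71, 46, 78, 47, 71, 79, 31, 22, 30, 86, 94, 95,
  87, 56, 46, 55, 39, 47, 31, 63, 22, 30, 54, 62, 86, 94, 70, 78, 95, 87, 79, 71, 40, 88, 30, 39,
  87, 23, 31, 47, 95, 38, 46, 86, 94, 54, 62, 70, 78, 63, 55, 79, 71, 23, 24, 30, 39, 40, 46, 55,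
  56, 62, 71, 72, 78, 87, 88, 94, 39, 87, 40, 46, 88, 94, 55, 56, 62, 71, 72, 78, 158, 174, 159,
  106, 143, 139, 172, 108, 156, 124, 140, 22, 26, 31, 40, 39, 47, 23, 42, 24, 38, 88, 54, 95, 58,
  63, 90, 86, 70, 74, 79, 24, 23, 28, 108, 140, 124, 44, 39, 125, 47, 141, 222, 46, 44, 171, 155,
  41, 42, 156, 46, 25, 30, 38, 86, 42, 47, 90, 95, 54, 58, 63, 70, 74, 79, 159, 155, 158, 143,
  137, 142, 103, 22, 23, 31, 38, 39, 47, 54, 55, 63, 70, 71, 79, 86, 87, 95, 38, 86, 39, 47, 87,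
  95, 54, 55, 63, 70, 71, 79, 126, 142, 137, 25, 24, 31, 40, 39, 41, 57, 56, 28, 156, 172, 44, 26,
  42, 47, 38, 123, 139, 88, 72, 89, 73, 44, 92, 140, 139, 123, 55, 38, 108, 124, 60, 87, 76, 71,
  139, 47, 123, 41, 46, 57, 30, 56, 23, 62, 87, 55, 88, 94, 71, 72, 78, 41, 89, 40, 47, 88, 95,
  54, 63, 56, 57, 73, 72, 79, 70, 79, 72, 73, 57, 56, 63, 126, 142, 143, 139, 158, 175, 106, 171,
  31, 22, 26, 56, 55, 63, 70, 79, 71, 72, 88, 87, 95, 23, 24, 40, 39, 47, 86, 74, 95, 79, 71, 72,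
  88, 87, 23, 24, 40, 39, 47, 40, 72, 39, 47, 71, 79, 23, 24, 88, 87, 95, 174, 154, 159, 137, 155,
  24, 23, 31, 39, 40, 46, 56, 41, 63, 47, 30, 62, 25, 57, 89, 73, 94, 95, 78, 79, 47, 40, 41, 40,
  88, 25, 47, 95, 30, 31, 46, 94, 41, 89, 57, 73, 62, 63, 78, 79, 137, 159, 143, 139, 126, 140,
  24, 28, 44, 92, 40, 88, 56, 72, 60, 76, 40, 88, 44, 92, 60, 76, 56, 72, 124, 28, 23, 125, 222,
  108, 22, 38, 86, 44, 92, 60, 76, 54, 70, 159, 137, 155, 156, 25, 41, 89, 44, 92, 60, 76, 57, 73,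
  175, 106, 171, 172, 26, 42, 90, 44, 92, 60, 76, 58, 74, 154, 239, 62, 55, 63, 70, 79, 71, 76,
  78, 92, 94, 87, 95, 31, 22, 30, 38, 46, 47, 39, 86, 76, 95, 71, 79, 78, 94, 87, 31, 22, 30, 38,
  46, 47, 39, 46, 78, 39, 47, 71, 79, 31, 22, 30, 86, 94, 95, 87, 158, 174, 39, 87, 44, 92, 60,
  76, 55, 71, 44, 92, 24, 108, 38, 86, 54, 70, 60, 76, 22, 159, 137, 155, 156, 41, 89, 57, 73, 60,
  76, 175, 106, 171, 172, 42, 90, 58, 74, 60, 76, 154, 156, 41, 89, 172, 106, 26, 171, 155, 57,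
  73, 58, 60, 74, 76, 137, 25, 155, 171, 26, 106, 172, 42, 90, 58, 74, 57, 60, 73, 76, 42, 172,
  142, 239, 103, 239, 106, 107, 123, 171, 23, 22, 109, 125, 124, 28, 108, 44, 92, 39, 87, 55, 71,
  54, 60, 70, 76, 24, 120, 140, 28, 44, 92, 40, 88, 56, 60, 76, 72, 139, 141, 143, 127, 126, 142,
  30, 62, 222, 94, 78, 95, 79, 139, 141, 143, 127, 31, 126, 142, 30, 222, 46, 47, 38, 63, 39, 55,
  143, 139, 142, 40, 88, 47, 39, 38, 120, 31, 126, 30, 46, 110, 55, 44, 140, 120, 56, 87, 72, 71,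
  137, 141, 157, 139, 155, 120, 154, 25, 26, 42, 90, 41, 89, 57, 73, 58, 74, 41, 89, 42, 90, 58,
  74, 57, 73, 38, 39, 42, 44, 26, 58, 41, 156, 172, 28, 60, 92, 76, 90, 74, 40, 39, 41, 44, 25,
  57, 42, 172, 156, 28, 60, 92, 76, 89, 73, 54, 55, 58, 60, 42, 74, 57, 108, 156, 172, 44, 76, 28,
  92, 26, 90, 56, 55, 57, 60, 41, 73, 58, 140, 172, 156, 44, 76, 28, 92, 25, 89, 70, 71, 74, 87,
  76, 58, 90, 73, 86, 108, 156, 172, 60, 92, 44, 28, 42, 26, 86, 87, 90, 92, 26, 74, 89, 108, 156,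
  172, 28, 76, 44, 60, 42, 58, 72, 71, 73, 87, 76, 57, 89, 74, 88, 140, 172, 156, 60, 92, 44, 28,
  41, 25, 88, 87, 89, 92, 25, 73, 90, 140, 172, 156, 28, 76, 44, 60, 41, 57, 158, 142, 25, 30, 46,
  94, 41, 89, 57, 73, 62, 78, 41, 89, 46, 94, 62, 78, 57, 73, 174, 175, 159, 25, 31, 47, 95, 41,
  89, 57, 73, 63, 79, 41, 89, 47, 95, 63, 79, 57, 73, 140, 127, 31, 126, 142, 222, 38, 39, 44, 46,
  40, 47, 47, 39, 46, 40, 88, 41, 89, 57, 73, 56, 72, 40, 88, 39, 38, 120, 127, 31, 47, 55, 44,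
  140, 120, 56, 87, 72, 71, 159, 155, 158, 142, 126, 120, 127, 141, 222, 62, 56, 63, 72, 78, 94,
  71, 88, 95, 120, 31, 127, 79, 73, 78, 89, 94, 95, 88, 31, 25, 30, 41, 46, 47, 40, 46, 78, 40,
  47, 72, 79, 31, 25, 30, 89, 94, 95, 88, 40, 88, 39, 38, 120, 127, 31, 47, 55, 44, 140, 120, 56,
  87, 72, 71, 38, 86, 39, 87, 55, 71, 54, 70, 39, 87, 38, 86, 109, 125, 124, 44, 92, 60, 76, 55,
  71, 28, 120, 40, 88, 172, 26, 42, 90, 44, 92, 60, 76, 58, 74, 139, 143, 155, 137, 159, 156, 25,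
  41, 89, 44, 92, 60, 76, 57, 73, 154, 25, 26, 42, 90, 41, 89, 57, 73, 58, 74, 41, 89, 42, 90, 58,
  74, 57, 73, 56, 72, 55, 71, 140, 24, 139, 141, 143, 127, 47, 95, 126, 142, 222, 30, 31, 40, 88,
  44, 46, 92, 94, 60, 62, 76, 78, 56, 63, 72, 79, 54, 70, 55, 71, 22, 23, 26, 125, 109, 108, 28,
  124, 44, 92, 38, 86, 54, 70, 55, 60, 71, 76, 123, 127, 139, 120, 143, 171, 175, 155, 154, 159,
  120, 137, 24, 25, 41, 89, 40, 88, 56, 72, 57, 73, 40, 88, 41, 89, 57, 73, 56, 72, 39, 38, 40,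
  44, 24, 56, 41, 156, 140, 28, 60, 92, 76, 88, 72, 55, 54, 56, 60, 40, 72, 57, 124, 156, 140, 44,
  76, 28, 92, 24, 88, 71, 70, 72, 86, 76, 56, 88, 73, 87, 124, 156, 140, 60, 92, 44, 28, 40, 24,
  87, 86, 88, 92, 24, 72, 89, 124, 156, 140, 28, 76, 44, 60, 40, 56, 142, 126, 24, 30, 46, 94, 40,
  88, 56, 72, 62, 78, 40, 88, 46, 94, 62, 78, 56, 72, 158, 159, 143, 24, 31, 47, 95, 40, 88, 56,
  72, 63, 79, 40, 88, 47, 95, 63, 79, 56, 72, 143, 142, 126, 110, 222, 62, 55, 63, 70, 71, 79, 72,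
  78, 88, 94, 95, 87, 31, 24, 30, 40, 46, 47, 39, 78, 71, 79, 46, 78, 39, 47, 71, 79, 31, 24, 30,
  88, 94, 95, 87, 42, 90, 38, 86, 54, 70, 58, 74, 39, 87, 38, 86, 54, 70, 55, 71, 39, 87, 38, 86,
  54, 70, 55, 71, 38, 86, 39, 42, 87, 90, 108, 44, 92, 60, 76, 54, 70, 28, 125, 109, 123, 127,
  120, 139, 140, 24, 40, 88, 44, 92, 60, 76, 56, 72, 171, 175, 155, 154, 159, 156, 25, 41, 89, 44,
  92, 60, 76, 57, 73, 137, 24, 25, 41, 89, 40, 88, 56, 72, 57, 73, 40, 88, 41, 89, 57, 73, 56, 72,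
  58, 74, 54, 70, 143, 139, 142, 126, 110, 222, 30, 23, 31, 47, 95, 40, 46, 88, 94, 56, 62, 72,
  78, 63, 55, 79, 71, 55, 71, 54, 70, 55, 71, 54, 70, 175, 171, 174, 110, 126, 159, 154, 158, 120,
  137, 109, 125, 222, 23, 22, 24, 39, 38, 40, 139, 155, 143, 62, 54, 63, 47, 42, 46, 26, 30, 31,
  25, 154, 158, 89, 88, 95, 90, 94, 74, 78, 79, 70, 46, 78, 47, 70, 79, 31, 26, 30, 90, 94, 95,
  86, 55, 46, 54, 38, 47, 31, 63, 26, 30, 58, 62, 90, 94, 74, 78, 95, 86, 79, 70, 39, 87, 30, 38,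
  86, 22, 31, 47, 95, 42, 46, 90, 94, 58, 62, 74, 78, 63, 54, 79, 70, 22, 23, 30, 38, 39, 46, 54,
  55, 62, 70, 71, 78, 86, 87, 94, 38, 86, 39, 46, 87, 94, 54, 55, 62, 70, 71, 78, 143, 127, 139,
  24, 23, 31, 39, 38, 40, 56, 55, 28, 140, 156, 44, 25, 41, 47, 42, 107, 123, 87, 71, 88, 72, 44,
  92, 124, 123, 107, 54, 42, 172, 108, 60, 86, 76, 70, 123, 47, 107, 40, 46, 56, 30, 55, 22, 62,
  86, 54, 87, 94, 70, 71, 78, 40, 88, 39, 47, 87, 95, 55, 56, 72, 71, 79, 63, 56, 72, 71, 79, 142,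
  143, 127, 137, 123, 158, 154, 156, 140, 172, 124, 108, 26, 25, 31, 39, 38, 47, 22, 41, 23, 42,
  87, 58, 95, 57, 63, 89, 90, 74, 73, 79, 23, 22, 28, 124, 172, 140, 44, 108, 24, 40, 38, 141, 47,
  109, 222, 46, 125, 44, 155, 139, 40, 41, 140, 46, 24, 30, 42, 90, 41, 47, 89, 95, 55, 63, 57,
  58, 74, 73, 79, 39, 71, 38, 70, 79, 86, 87, 23, 22, 31, 110, 126, 127, 123, 175, 171, 142, 159,
  154, 155, 31, 25, 26, 55, 54, 63, 70, 71, 87, 86, 95, 22, 23, 39, 38, 47, 79, 73, 74, 39, 71,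
  38, 47, 70, 79, 22, 23, 87, 86, 95, 158, 137, 143, 120, 139, 23, 22, 31, 38, 39, 46, 55, 40, 63,
  47, 30, 62, 24, 56, 88, 72, 94, 95, 78, 79, 47, 39, 40, 39, 87, 24, 47, 95, 30, 31, 46, 94, 40,
  88, 56, 72, 62, 63, 78, 79, 120, 143, 106, 174, 127, 123, 110, 175, 171, 124, 23, 28, 44, 92,
  39, 87, 55, 71, 60, 76, 39, 87, 44, 92, 60, 76, 55, 71, 108, 28, 22, 109, 222, 172, 26, 106, 42,
  90, 44, 92, 60, 76, 54, 58, 70, 74, 143, 120, 139, 140, 24, 40, 88, 44, 92, 60, 76, 56, 72, 159,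
  154, 155, 156, 25, 41, 89, 44, 92, 60, 76, 57, 73, 137, 239, 62, 54, 63, 70, 76, 78, 92, 94, 86,
  95, 31, 23, 30, 39, 46, 47, 38, 79, 71, 78, 87, 94, 95, 86, 31, 23, 30, 39, 46, 47, 38, 46, 78,
  38, 47, 70, 79, 31, 23, 30, 87, 94, 95, 86, 142, 158, 38, 86, 44, 92, 60, 76, 54, 70, 44, 92,
  23, 172, 42, 90, 58, 74, 60, 76, 26, 143, 120, 139, 140, 40, 88, 56, 72, 60, 76, 159, 154, 155,
  156, 41, 89, 57, 73, 60, 76, 137, 140, 40, 88, 156, 154, 25, 155, 139, 56, 72, 57, 60, 73, 76,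
  120, 24, 139, 155, 25, 154, 156, 41, 89, 57, 73, 56, 60, 72, 76, 41, 156, 106, 174, 239, 126,
  154, 143, 120, 142, 137, 109, 173, 222, 26, 22, 25, 42, 38, 41, 155, 139, 159, 62, 54, 63, 47,
  39, 46, 23, 30, 31, 24, 120, 142, 88, 89, 95, 87, 94, 71, 78, 79, 70, 46, 78, 47, 70, 79, 31,
  23, 30, 87, 94, 95, 86, 58, 46, 54, 38, 47, 31, 63, 23, 30, 55, 62, 87, 94, 71, 78, 95, 86, 79,
  70, 42, 90, 30, 38, 86, 22, 31, 47, 95, 39, 46, 87, 94, 55, 62, 71, 78, 63, 54, 79, 70, 22, 26,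
  30, 38, 42, 46, 54, 58, 62, 70, 74, 78, 86, 90, 94, 38, 86, 42, 46, 90, 94, 54, 58, 62, 70, 74,
  78, 159, 155, 25, 26, 31, 42, 38, 41, 57, 58, 28, 156, 140, 44, 24, 40, 47, 39, 107, 171, 90,
  74, 89, 73, 44, 92, 172, 171, 107, 54, 39, 124, 108, 60, 86, 76, 70, 171, 47, 107, 41, 46, 57,
  30, 58, 22, 62, 86, 54, 90, 94, 70, 74, 78, 41, 89, 42, 47, 90, 95, 55, 63, 58, 57, 73, 74, 79,
  71, 79, 74, 73, 57, 58, 63, 158, 159, 126, 239, 28, 60, 222, 239, 108, 22, 54, 107, 111, 123,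
  103, 127, 171, 106, 175, 124, 23, 55, 87, 71, 92, 76, 172, 26, 58, 90, 74, 92, 76, 109, 205,
  110, 125, 103, 126, 205, 29, 61, 70, 76, 92, 86, 93, 77, 76, 92, 86, 93, 125, 173, 126, 174,
  141, 120, 142, 140, 137, 156, 154, 157, 157, 154, 158, 86, 70, 92, 76, 103, 205, 29, 61, 106,
  107, 123, 171, 124, 23, 55, 87, 71, 86, 92, 70, 76, 172, 26, 58, 90, 74, 86, 92, 70, 76, 120,
  154, 39, 40, 139, 143, 137, 155, 25, 26, 42, 90, 41, 89, 57, 73, 58, 74, 41, 89, 42, 90, 58, 74,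
  57, 73, 159, 155, 158, 142, 141, 157, 156, 140, 24, 45, 41, 44, 24, 56, 23, 55, 87, 71, 88, 72,
  23, 55, 44, 24, 56, 45, 139, 143, 137, 155, 25, 26, 42, 90, 41, 89, 57, 73, 58, 74, 41, 89, 42,
  90, 58, 74, 57, 73, 159, 158, 142, 141, 157, 40, 156, 140, 88, 72, 87, 71, 156, 25, 157, 173,
  109, 41, 44, 39, 42, 38, 45, 22, 54, 23, 26, 55, 58, 87, 90, 71, 74, 86, 93, 70, 77, 45, 42, 44,
  140, 24, 141, 125, 109, 39, 38, 45, 22, 54, 23, 55, 87, 71, 86, 93, 70, 77, 44, 40, 45, 38, 39,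
  42, 123, 127, 120, 139, 140, 24, 56, 124, 88, 72, 87, 92, 71, 76, 171, 175, 154, 155, 25, 156,
  137, 24, 40, 88, 41, 89, 57, 73, 56, 72, 41, 89, 40, 137, 156, 57, 92, 73, 76, 56, 44, 156, 137,
  57, 88, 73, 72, 159, 155, 158, 174, 173, 157, 156, 172, 26, 45, 41, 44, 26, 58, 22, 54, 86, 70,
  90, 74, 143, 139, 142, 126, 125, 141, 140, 124, 23, 45, 40, 44, 23, 55, 22, 54, 86, 70, 87, 71,
  22, 54, 44, 23, 26, 55, 58, 45, 123, 127, 120, 139, 171, 175, 154, 155, 140, 24, 40, 25, 156,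
  137, 24, 40, 88, 41, 89, 57, 73, 56, 72, 41, 89, 156, 137, 40, 88, 56, 72, 57, 73, 159, 158,
  174, 173, 157, 42, 156, 172, 90, 74, 86, 70, 143, 142, 126, 125, 141, 39, 140, 124, 87, 71, 86,
  70, 172, 26, 173, 109, 125, 110, 174, 175, 111, 107, 38, 39, 45, 23, 55, 22, 54, 86, 70, 87, 93,
  71, 77, 44, 42, 45, 109, 125, 124, 23, 55, 39, 38, 44, 107, 123, 87, 71, 86, 92, 70, 76, 123,
  107, 70, 71, 77, 61, 54, 38, 45, 29, 22, 86, 87, 93, 54, 86, 61, 87, 93, 45, 29, 38, 22, 124,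
  23, 55, 109, 110, 126, 125, 127, 111, 107, 139, 143, 120, 123, 140, 87, 71, 88, 92, 72, 76, 140,
  24, 56, 88, 72, 92, 76, 26, 172, 106, 22, 173, 86, 205, 93, 29, 61, 87, 92, 76, 71, 77, 173,
  106, 174, 142, 120, 141, 137, 205, 29, 61, 38, 45, 39, 44, 40, 120, 41, 141, 157, 25, 57, 24,
  56, 88, 72, 89, 93, 73, 77, 44, 39, 45, 141, 172, 157, 154, 156, 156, 158, 157, 154, 172, 106,
  205, 29, 38, 42, 45, 44, 39, 45, 125, 205, 111, 107, 108, 22, 54, 86, 70, 92, 76, 127, 103, 123,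
  124, 23, 55, 87, 71, 92, 76, 126, 125, 142, 120, 141, 143, 175, 106, 171, 172, 26, 58, 90, 74,
  92, 76, 174, 173, 137, 159, 154, 158, 158, 154, 157, 110, 109, 126, 103, 125, 127, 174, 106,
  173, 175, 142, 141, 137, 158, 154, 159, 157, 158, 154, 159, 120, 143, 110, 125, 142, 157, 174,
  106, 239, 111, 175, 127, 123, 124, 23, 55, 87, 71, 92, 76, 111, 103, 107, 108, 22, 54, 86, 70,
  92, 76, 175, 171, 159, 154, 155, 25, 156, 172, 26, 58, 90, 74, 92, 76, 41, 26, 47, 172, 30, 31,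
  108, 46, 22, 38, 158, 137, 143, 120, 139, 140, 24, 56, 88, 72, 92, 76, 126, 103, 120, 111, 143,
  107, 139, 140, 24, 56, 88, 72, 92, 76, 124, 205, 141, 137, 156, 25, 57, 108, 22, 54, 86, 70, 92,
  76, 172, 26, 58, 154, 73, 76, 92, 89, 90, 74, 76, 92, 89, 90, 173, 154, 158, 137, 239, 143, 159,
  175, 171, 172, 26, 58, 90, 74, 92, 76, 156, 25, 57, 159, 155, 89, 73, 92, 76, 143, 139, 127,
  120, 123, 23, 124, 140, 24, 56, 88, 72, 92, 76, 39, 24, 47, 30, 31, 41, 46, 126, 103, 111, 106,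
  107, 108, 22, 54, 86, 70, 92, 76, 158, 137, 141, 120, 205, 124, 140, 156, 25, 57, 159, 155, 89,
  73, 92, 76, 143, 139, 239, 140, 24, 56, 88, 72, 92, 76, 124, 23, 55, 127, 123, 87, 71, 92, 76,
  126, 103, 111, 107, 154, 172, 174, 175, 106, 108, 22, 54, 86, 70, 92, 76, 175, 106, 171, 22,
  108, 172, 26, 58, 90, 74, 92, 76, 86, 26, 172, 108, 54, 92, 70, 76, 141, 120, 126, 103, 239,
  111, 127, 143, 139, 140, 24, 56, 88, 72, 92, 76, 124, 23, 55, 205, 127, 123, 87, 71, 92, 76,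
  111, 107, 156, 25, 57, 108, 22, 54, 86, 70, 92, 76, 175, 106, 171, 172, 26, 58, 90, 74, 92, 76,
  174, 106, 172, 154, 159, 155, 89, 73, 92, 76, 137, 157, 126, 103, 109, 124, 23, 55, 127, 123,
  87, 71, 92, 76, 111, 107, 239, 143, 139, 141, 108, 22, 54, 86, 70, 92, 76, 175, 106, 171, 172,
  26, 58, 90, 74, 92, 76, 174, 106, 172, 154, 156, 158, 157, 137, 140, 24, 56, 88, 72, 92, 76,
  159, 137, 155, 24, 140, 156, 25, 57, 89, 73, 92, 76, 88, 25, 156, 140, 56, 92, 72, 76, 120, 142,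
  120, 142, 108, 205, 109, 126, 174, 111, 107, 108, 22, 54, 86, 70, 92, 76, 23, 124, 103, 22, 125,
  38, 86, 205, 39, 45, 87, 93, 61, 55, 54, 70, 71, 77, 26, 172, 30, 106, 22, 173, 38, 205, 45, 29,
  46, 39, 125, 103, 124, 55, 124, 103, 54, 125, 38, 205, 39, 45, 29, 58, 172, 106, 54, 173, 38,
  205, 42, 45, 29, 127, 103, 123, 124, 87, 71, 92, 76, 141, 139, 143, 120, 123, 142, 87, 71, 88,
  94, 72, 78, 140, 24, 56, 88, 72, 92, 76, 156, 25, 57, 158, 154, 73, 76, 92, 89, 90, 155, 172,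
  159, 106, 175, 74, 155, 159, 175, 79, 106, 171, 63, 54, 157, 137, 142, 120, 143, 239, 159, 155,
  89, 73, 92, 76, 137, 157, 205, 158, 154, 172, 173, 142, 120, 125, 143, 103, 139, 124, 205, 140,
  24, 56, 88, 72, 92, 76, 239, 127, 175, 106, 173, 142, 120, 143, 141, 137, 157, 154, 158, 158,
  154, 159, 106, 173, 103, 125, 44, 76, 108, 22, 38, 70, 107, 111, 123, 103, 127, 124, 23, 39, 55,
  205, 29, 45, 109, 125, 61, 120, 56, 141, 140, 24, 40, 72, 45, 77, 39, 71, 23, 87, 29, 88, 93,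
  140, 24, 40, 139, 143, 127, 63, 106, 171, 172, 173, 58, 109, 54, 45, 77, 39, 71, 74, 23, 87, 90,
  29, 93, 86, 175, 171, 137, 155, 156, 157, 57, 141, 56, 45, 47, 41, 42, 25, 26, 154, 159, 154,
  155, 23, 31, 47, 41, 42, 39, 47, 31, 25, 26, 103, 205, 29, 45, 172, 26, 42, 173, 106, 156, 25,
  41, 157, 154, 140, 24, 40, 141, 137, 124, 23, 39, 125, 120, 54, 55, 58, 123, 171, 139, 155, 56,
  57, 107, 123, 171, 55, 58, 56, 57, 139, 155, 109, 125, 124, 23, 39, 71, 123, 107, 54, 55, 61,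
  45, 77, 38, 70, 22, 86, 29, 87, 93, 124, 23, 39, 71, 123, 127, 111, 107, 54, 63, 120, 139, 140,
  56, 55, 47, 79, 38, 70, 22, 86, 31, 95, 87, 88, 92, 143, 139, 205, 29, 45, 125, 109, 61, 106,
  58, 173, 172, 26, 42, 74, 45, 77, 38, 70, 22, 86, 29, 90, 93, 172, 26, 42, 171, 175, 154, 155,
  156, 157, 57, 173, 58, 45, 47, 41, 40, 25, 24, 137, 159, 137, 155, 22, 31, 47, 40, 41, 38, 47,
  31, 24, 25, 44, 92, 111, 107, 108, 38, 86, 54, 70, 60, 76, 22, 31, 127, 103, 123, 124, 39, 87,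
  55, 71, 60, 76, 175, 106, 171, 172, 42, 90, 58, 74, 60, 76, 103, 23, 38, 39, 47, 54, 55, 63, 70,
  71, 79, 86, 87, 95, 124, 39, 87, 139, 143, 120, 123, 140, 55, 71, 56, 60, 72, 76, 140, 40, 88,
  56, 72, 60, 76, 24, 141, 29, 156, 41, 89, 57, 60, 76, 73, 155, 159, 154, 58, 171, 172, 155, 159,
  154, 171, 172, 106, 26, 137, 25, 157, 205, 45, 93, 41, 89, 40, 88, 56, 72, 57, 61, 73, 77, 205,
  45, 125, 109, 120, 29, 23, 103, 106, 107, 123, 171, 124, 39, 87, 108, 55, 71, 54, 60, 70, 76,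
  23, 22, 205, 45, 93, 120, 24, 172, 42, 90, 108, 58, 74, 54, 60, 70, 76, 26, 154, 25, 139, 143,
  41, 156, 155, 137, 159, 155, 137, 159, 40, 140, 156, 157, 173, 29, 109, 38, 86, 39, 42, 87, 90,
  55, 58, 71, 74, 54, 61, 70, 77, 140, 141, 125, 29, 109, 38, 86, 39, 87, 55, 71, 54, 61, 70, 77,
  125, 29, 109, 108, 38, 86, 45, 93, 39, 87, 55, 71, 54, 61, 70, 77, 108, 38, 86, 124, 54, 70, 55,
  60, 71, 76, 22, 23, 26, 205, 45, 93, 123, 127, 139, 120, 143, 140, 40, 88, 56, 72, 60, 76, 24,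
  120, 137, 25, 155, 159, 42, 172, 171, 154, 175, 171, 154, 175, 41, 156, 156, 157, 141, 29, 125,
  39, 87, 38, 40, 86, 88, 54, 56, 70, 72, 55, 61, 71, 77, 124, 39, 125, 141, 29, 39, 124, 109, 29,
  125, 124, 39, 87, 45, 93, 38, 86, 54, 70, 55, 61, 71, 77, 175, 171, 172, 42, 90, 58, 74, 60, 76,
  108, 26, 38, 86, 124, 31, 54, 55, 60, 76, 123, 70, 107, 107, 123, 23, 22, 47, 95, 42, 90, 58,
  74, 63, 79, 70, 71, 76, 127, 123, 124, 39, 87, 55, 71, 60, 76, 108, 23, 38, 86, 171, 175, 106,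
  107, 172, 54, 70, 58, 60, 74, 76, 172, 42, 90, 58, 74, 60, 76, 26, 173, 29, 156, 41, 89, 155,
  159, 120, 24, 143, 137, 139, 140, 140, 40, 88, 137, 143, 139, 56, 72, 60, 76, 57, 73, 60, 76,
  154, 25, 157, 205, 45, 93, 41, 89, 42, 90, 58, 74, 57, 61, 73, 77, 205, 45, 109, 125, 106, 29,
  22, 107, 111, 123, 103, 127, 124, 139, 143, 155, 137, 159, 156, 106, 171, 154, 172, 175, 171,
  154, 172, 120, 140, 108, 123, 127, 171, 175, 139, 120, 143, 140, 137, 156, 155, 154, 159, 155,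
  154, 159, 106, 172, 103, 124]

theorem mainC4_run :
    (search 110 (insAll 0 [1, 2, 3, 4, 5, 191]) (insAll 0 [6, 7, 8, 9, 10, 12, 14, 15, 188])
      mainC4Order).isSome = true := by
  decide +kernel

/-! ### Soundness of the search -/

/-- All edges recorded in the mask `M` satisfy `P`. -/
def MaskOK (P : ℕ → ℕ → Prop) (M : ℕ) : Prop :=
  ∀ a b, a < 16 → b < 16 → M.testBit (16 * a + b) = true → P a b

theorem maskOK_ins {P : ℕ → ℕ → Prop} (hs : ∀ a b, P a b → P b a) {M a b : ℕ}
    (hM : MaskOK P M) (ha : a < 16) (hb : b < 16) (h : P a b) : MaskOK P (ins M a b) := by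
  intro x y hx hy ht
  simp only [ins, Nat.testBit_or, Nat.testBit_two_pow, Bool.or_eq_true, decide_eq_true_eq] at ht
  rcases ht with ht | ht | ht
  · exact hM x y hx hy ht
  · obtain ⟨rfl, rfl⟩ : a = x ∧ b = y := by omega
    exact h
  · obtain ⟨rfl, rfl⟩ : b = x ∧ a = y := by omega
    exact hs _ _ h

theorem maskOK_insAll {P : ℕ → ℕ → Prop} (hs : ∀ a b, P a b → P b a) (l : List ℕ) :
    ∀ M, MaskOK P M → (∀ e ∈ l, e < 256 ∧ P (e / 16) (e % 16)) → MaskOK P (insAll M l) := by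
  induction l with
  | nil => intro M hM _; exact hM
  | cons e l ih =>
    intro M hM h
    have h1 := h e (by simp)
    refine ih _ (maskOK_ins hs hM (by omega) (by omega) h1.2) ?_
    intro x hx
    exact h x (by simp [hx])

theorem maskOK_zero (P : ℕ → ℕ → Prop) : MaskOK P 0 := by
  intro a b _ _ h
  simp at h

theorem lt_of_testBit_65535 {i : ℕ} (h : (65535 : ℕ).testBit i = true) : i < 16 := by
  by_contra hc
  have h2 : (65535 : ℕ) < 2 ^ i :=
    lt_of_lt_of_le (by norm_num) (Nat.pow_le_pow_right (by norm_num) (not_lt.mp hc))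
  rw [Nat.testBit_lt_two_pow h2] at h
  exact absurd h (by simp)

theorem testBit_common {M a b i : ℕ} (h : (common M a b).testBit i = true) :
    i < 16 ∧ M.testBit (16 * a + i) = true ∧ M.testBit (16 * b + i) = true := by
  simp only [common, Nat.testBit_and, Nat.testBit_shiftRight, Bool.and_eq_true] at h
  exact ⟨lt_of_testBit_65535 h.2, h.1.1, h.1.2⟩

theorem edgeIn_spec {M C : ℕ} : ∀ n, edgeIn M C n = true →
    ∃ x y, C.testBit x = true ∧ C.testBit y = true ∧ M.testBit (16 * x + y) = true := by
  intro n
  induction n with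
  | zero => intro h; simp [edgeIn] at h
  | succ n ih =>
    intro h
    simp only [edgeIn, Bool.or_eq_true, Bool.and_eq_true, Bool.not_eq_true'] at h
    rcases h with ⟨h1, h2⟩ | h
    · have h3 : (M >>> (16 * n)) &&& C ≠ 0 := Nat.ne_of_beq_eq_false h2
      obtain ⟨i, hi⟩ := Nat.exists_testBit_of_ne_zero h3
      simp only [Nat.testBit_and, Nat.testBit_shiftRight, Bool.and_eq_true] at hi
      exact ⟨n, i, h1, hi.2, hi.1⟩
    · exact ih h

theorem adjm_lt {a b : ℕ} (h : adjm a b = true) : a < b ∧ b < 16 := by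
  simp only [adjm, Bool.and_eq_true] at h
  exact ⟨by simpa using h.1.1, by simpa using h.1.2⟩

theorem search_sound (blue red : ℕ → ℕ → Prop)
    (hbs : ∀ a b, blue a b → blue b a) (hrs : ∀ a b, red a b → red b a)
    (htot : ∀ a b, adjm a b = true → blue a b ∨ red a b)
    (hT : ∀ a b c, blue a b → blue a c → blue b c → False)
    (hK : ∀ a b c d, red a b → red a c → red a d → red b c → red b d → red c d → False) :
    ∀ f B R l l', search f B R l = some l' → MaskOK blue B → MaskOK red R → False := by
  intro f
  induction f with
  | zero => intro B R l l' h; simp [search] at h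
  | succ f ih =>
    intro B R l l' h hB hR
    cases l with
    | nil => simp [search] at h
    | cons e l =>
      simp only [search] at h
      generalize e / 16 = a at h
      generalize e % 16 = b at h
      cases hadj : adjm a b with
      | false => simp [hadj] at h
      | true =>
        rw [hadj, cond_true] at h
        obtain ⟨hab, hb⟩ := adjm_lt hadj
        have ha : a < 16 := by omega
        have key : ∀ l₁, (bif Nat.beq (common (ins B a b) a b) 0 then
            search f (ins B a b) R l else some l) = some l₁ → ¬ blue a b := by
          intro l₁ h1 hbl
          have hB' := maskOK_ins hbs hB ha hb hbl
          cases hc : Nat.beq (common (ins B a b) a b) 0 with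
          | true =>
            rw [hc, cond_true] at h1
            exact ih _ _ _ _ h1 hB' hR
          | false =>
            obtain ⟨i, hi⟩ := Nat.exists_testBit_of_ne_zero (Nat.ne_of_beq_eq_false hc)
            obtain ⟨hi, h2, h3⟩ := testBit_common hi
            exact hT a b i hbl (hB' _ _ ha hi h2) (hB' _ _ hb hi h3)
        generalize (bif Nat.beq (common (ins B a b) a b) 0 then
            search f (ins B a b) R l else some l) = o at h key
        cases o with
        | none => simp at h
        | some l₁ =>
          have hre : red a b := (htot a b hadj).resolve_left (key l₁ rfl)
          have hR' := maskOK_ins hrs hR ha hb hre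
          dsimp only at h
          cases hc : edgeIn (ins R a b) (common (ins R a b) a b) 16 with
          | false =>
            rw [hc, cond_false] at h
            exact ih _ _ _ _ h hB hR'
          | true =>
            obtain ⟨x, y, hx, hy, hxy⟩ := edgeIn_spec _ hc
            obtain ⟨hx, h1, h2⟩ := testBit_common hx
            obtain ⟨hy, h3, h4⟩ := testBit_common hy
            exact hK a b x y hre (hR' _ _ ha hx h1) (hR' _ _ ha hy h3) (hR' _ _ hb hx h2)
              (hR' _ _ hb hy h4) (hR' _ _ hx hy hxy)

/-! ### The graph -/

/-- The vertex of `K₁`. -/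
def apex : V16 := Sum.inl 0

/-- Vertex `i` of the `k`-th cycle. -/
def cyc (k : Fin 3) (i : Fin 5) : V16 := ![ι1, ι2, ι3] k i

theorem adj_apex (k : Fin 3) (i : Fin 5) : G16.Adj apex (cyc k i) := by
  fin_cases k <;> simp [cyc, apex, ι1, ι2, ι3, G16, graphJoin]

theorem adj_cyc_ne {k l : Fin 3} (h : k ≠ l) (i j : Fin 5) : G16.Adj (cyc k i) (cyc l j) := by
  fin_cases k <;> fin_cases l <;> simp [cyc, ι1, ι2, ι3, G16, graphJoin] at h ⊢

theorem adj_cyc_iff (k : Fin 3) (i j : Fin 5) :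
    G16.Adj (cyc k i) (cyc k j) ↔ (cycleGraph 5).Adj i j := by
  fin_cases k <;> simp [cyc, ι1, ι2, ι3, G16, graphJoin]

theorem c5_adj_one : ∀ i : Fin 5, (cycleGraph 5).Adj i (i + 1) := by
  intro i; rw [cycleGraph_adj]; revert i; decide

theorem c5_adj_cases : ∀ i j : Fin 5, (cycleGraph 5).Adj i j → j = i + 1 ∨ i = j + 1 := by
  intro i j; rw [cycleGraph_adj]; revert i j; decide

/-- The vertex number `n` of the 5-cycle, counted from `r`. -/
def rot (r : Fin 5) : ℕ → Fin 5
  | 0 => r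
  | 1 => r + 1
  | 2 => r + 2
  | 3 => r + 3
  | _ => r + 4

theorem rot_succ (r : Fin 5) (m : ℕ) (hm : m < 4) : rot r (m + 1) = rot r m + 1 := by
  interval_cases m <;> revert r <;> decide

theorem rot_four (r : Fin 5) : rot r 0 = rot r 4 + 1 := by
  revert r; decide

theorem fin5_add (r : Fin 5) : r + 1 + 1 = r + 2 ∧ r + 1 + 2 = r + 3 ∧ r + 2 + 1 = r + 3 ∧
    r + 2 + 2 = r + 4 ∧ r + 3 + 1 = r + 4 ∧ r + 3 + 2 = r ∧ r + 4 + 1 = r ∧ r + 4 + 2 = r + 1 := by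
  revert r; decide

theorem fin5_rot (r i : Fin 5) : i = r ∨ i = r + 1 ∨ i = r + 2 ∨ i = r + 3 ∨ i = r + 4 := by
  revert r i; decide

/-- The map from the model to the graph: the three cycles are permuted by `k` and rotated
by `r`. -/
def emb (k : ℕ → Fin 3) (r : ℕ → Fin 5) (n : ℕ) : V16 :=
  if n = 0 then apex
  else cyc (k ((n - 1) / 5)) (rot (r ((n - 1) / 5)) ((n - 1) % 5))

theorem emb_adj (k : ℕ → Fin 3) (r : ℕ → Fin 5) (h01 : k 0 ≠ k 1) (h02 : k 0 ≠ k 2)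
    (h12 : k 1 ≠ k 2) (a b : ℕ) (h : adjm a b = true) :
    G16.Adj (emb k r a) (emb k r b) := by
  obtain ⟨hab, hb⟩ := adjm_lt h
  have hb0 : b ≠ 0 := by omega
  by_cases ha0 : a = 0
  · simp only [emb, ha0, hb0, if_true, if_false]
    exact adj_apex _ _
  simp only [emb, ha0, hb0, if_false]
  by_cases hblk : (a - 1) / 5 = (b - 1) / 5
  · rw [← hblk, adj_cyc_iff]
    have h2 : b = a + 1 ∨ b = a + 4 := by
      simp only [adjm, Bool.and_eq_true, Bool.or_eq_true, Bool.not_eq_true'] at h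
      rcases h.2 with ((h | h) | h) | h
      · exact absurd (Nat.eq_of_beq_eq_true h) ha0
      · exact absurd hblk (Nat.ne_of_beq_eq_false h)
      · exact Or.inl (Nat.eq_of_beq_eq_true h)
      · exact Or.inr (Nat.eq_of_beq_eq_true h)
    rcases h2 with h2 | h2
    · have h3 : (b - 1) % 5 = (a - 1) % 5 + 1 := by omega
      rw [h3, rot_succ _ _ (by omega)]
      exact c5_adj_one _
    · have h3 : (b - 1) % 5 = 4 := by omega
      have h4 : (a - 1) % 5 = 0 := by omega
      rw [h3, h4, rot_four]
      exact (c5_adj_one _).symm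
  · apply adj_cyc_ne
    have h1 : (a - 1) / 5 < 3 := by omega
    have h2 : (b - 1) / 5 < 3 := by omega
    generalize (a - 1) / 5 = x at *
    generalize (b - 1) / 5 = y at *
    interval_cases x <;> interval_cases y <;> first | omega | assumption | (symm; assumption)

section Coloring

variable {E1 E2 : Set (Sym2 V16)}

/-- A successful search refutes a free coloring extending the given partial coloring. -/
theorem refute (hcol : IsBRColoring G16 E1 E2) (h3 : ¬ HasMonoNClique G16 E1 3)
    (h4 : ¬ HasMonoNClique G16 E2 4) {k0 k1 k2 : Fin 3} (h01 : k0 ≠ k1) (h02 : k0 ≠ k2)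
    (h12 : k1 ≠ k2) (r0 r1 r2 : Fin 5) (bl rl l : List ℕ)
    (hrun : (search 110 (insAll 0 bl) (insAll 0 rl) l).isSome = true)
    (hbl : ∀ e ∈ bl, e < 256 ∧
      s(emb (fun n => [k0, k1, k2].getD n 0) (fun n => [r0, r1, r2].getD n 0) (e / 16),
        emb (fun n => [k0, k1, k2].getD n 0) (fun n => [r0, r1, r2].getD n 0) (e % 16)) ∈ E1)
    (hrl : ∀ e ∈ rl, e < 256 ∧
      s(emb (fun n => [k0, k1, k2].getD n 0) (fun n => [r0, r1, r2].getD n 0) (e / 16),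
        emb (fun n => [k0, k1, k2].getD n 0) (fun n => [r0, r1, r2].getD n 0) (e % 16)) ∈ E2) :
    False := by
  have hadj := emb_adj (fun n => [k0, k1, k2].getD n 0) (fun n => [r0, r1, r2].getD n 0)
    h01 h02 h12
  generalize emb (fun n => [k0, k1, k2].getD n 0) (fun n => [r0, r1, r2].getD n 0) = g at *
  obtain ⟨l', hl'⟩ := Option.isSome_iff_exists.mp hrun
  have hE1 : ∀ x y, s(x, y) ∈ E1 → G16.Adj x y := by
    intro x y h
    have : s(x, y) ∈ G16.edgeSet := hcol.1 ▸ Or.inl h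
    exact this
  have hE2 : ∀ x y, s(x, y) ∈ E2 → G16.Adj x y := by
    intro x y h
    have : s(x, y) ∈ G16.edgeSet := hcol.1 ▸ Or.inr h
    exact this
  have hb : ∀ a b, s(g a, g b) ∈ E1 → s(g b, g a) ∈ E1 := by
    intro a b h; rwa [Sym2.eq_swap]
  have hr : ∀ a b, s(g a, g b) ∈ E2 → s(g b, g a) ∈ E2 := by
    intro a b h; rwa [Sym2.eq_swap]
  refine search_sound (fun a b => s(g a, g b) ∈ E1) (fun a b => s(g a, g b) ∈ E2) hb hr ?_ ?_ ?_
    _ _ _ _ _ hl' (maskOK_insAll hb _ _ (maskOK_zero _) hbl)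
    (maskOK_insAll hr _ _ (maskOK_zero _) hrl)
  · intro a b h
    have : s(g a, g b) ∈ E1 ∪ E2 := by
      rw [hcol.1]; exact hadj a b h
    exact this
  · intro a b c hab hac hbc
    apply h3
    refine ⟨{g a, g b, g c}, ?_, ?_⟩
    · rw [is3Clique_triple_iff]
      exact ⟨hE1 _ _ hab, hE1 _ _ hac, hE1 _ _ hbc⟩
    · have := hb _ _ hab
      have := hb _ _ hac
      have := hb _ _ hbc
      intro x hx y hy hxy
      simp only [Finset.mem_insert, Finset.mem_singleton] at hx hy
      rcases hx with rfl | rfl | rfl <;> rcases hy with rfl | rfl | rfl <;>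
        first | exact absurd rfl hxy | assumption
  · intro a b c d hab hac had hbc hbd hcd
    apply h4
    refine ⟨{g a, g b, g c, g d}, ?_, ?_⟩
    · have h3c : G16.IsNClique 3 {g b, g c, g d} := by
        rw [is3Clique_triple_iff]
        exact ⟨hE2 _ _ hbc, hE2 _ _ hbd, hE2 _ _ hcd⟩
      refine h3c.insert ?_
      intro x hx
      simp only [Finset.mem_insert, Finset.mem_singleton] at hx
      rcases hx with rfl | rfl | rfl
      · exact hE2 _ _ hab
      · exact hE2 _ _ hac
      · exact hE2 _ _ had
    · have := hr _ _ hab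
      have := hr _ _ hac
      have := hr _ _ had
      have := hr _ _ hbc
      have := hr _ _ hbd
      have := hr _ _ hcd
      intro x hx y hy hxy
      simp only [Finset.mem_insert, Finset.mem_singleton] at hx hy
      rcases hx with rfl | rfl | rfl | rfl <;> rcases hy with rfl | rfl | rfl | rfl <;>
        first | exact absurd rfl hxy | assumption

theorem fin5_split (P : Fin 5 → Prop) :
    (∃ r, P r ∧ P (r + 1)) ∨ (∃ r, ¬ P (r + 1) ∧ ¬ P (r + 3) ∧ ¬ P (r + 4)) := by
  classical
  have h : ∀ f : Fin 5 → Bool, (∃ r, f r = true ∧ f (r + 1) = true) ∨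
      (∃ r, ¬ f (r + 1) = true ∧ ¬ f (r + 3) = true ∧ ¬ f (r + 4) = true) := by decide
  simpa using h (fun i => decide (P i))

theorem fin5_change (P : Fin 5 → Prop) (h1 : ∃ i, P i) (h2 : ∃ i, ¬ P i) :
    ∃ i, P i ∧ ¬ P (i + 1) := by
  by_contra hc
  push Not at hc
  obtain ⟨i, hi⟩ := h1
  obtain ⟨j, hj⟩ := h2
  have a1 := hc _ hi
  have a2 := hc _ a1
  have a3 := hc _ a2
  have a4 := hc _ a3
  have : j = i ∨ j = i + 1 ∨ j = i + 1 + 1 ∨ j = i + 1 + 1 + 1 ∨ j = i + 1 + 1 + 1 + 1 := by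
    clear * -
    revert i j; decide
  rcases this with rfl | rfl | rfl | rfl | rfl <;> contradiction

theorem red_of_not_blue (hcol : IsBRColoring G16 E1 E2) {x y : V16} (h : G16.Adj x y)
    (hn : s(x, y) ∉ E1) : s(x, y) ∈ E2 := by
  have : s(x, y) ∈ E1 ∪ E2 := by rw [hcol.1]; exact h
  exact this.resolve_left hn

theorem cycEdges_spec (k : Fin 3) (e : Sym2 V16) (he : e ∈ cycEdges k) :
    ∃ i, e = s(cyc k i, cyc k (i + 1)) := by
  have h : ∀ f : Fin 5 → V16, e ∈ Sym2.map f '' (cycleGraph 5).edgeSet →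
      ∃ i, e = s(f i, f (i + 1)) := by
    rintro f ⟨e', he', rfl⟩
    induction e' with
    | _ x y =>
      rcases c5_adj_cases x y he' with rfl | rfl
      · exact ⟨x, rfl⟩
      · exact ⟨y, Sym2.eq_swap⟩
  fin_cases k
  · exact h ι1 he
  · exact h ι2 he
  · exact h ι3 he

/-- A cycle that is not monochromatic has consecutive edges colored blue, red. -/
theorem exists_change (hcol : IsBRColoring G16 E1 E2) (k : Fin 3)
    (h : ¬ (cycEdges k ⊆ E1 ∨ cycEdges k ⊆ E2)) :
    ∃ i, s(cyc k i, cyc k (i + 1)) ∈ E1 ∧ s(cyc k (i + 1), cyc k (i + 2)) ∈ E2 := by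
  push Not at h
  obtain ⟨h1, h2⟩ := h
  rw [Set.not_subset] at h1 h2
  have hadj : ∀ i, G16.Adj (cyc k i) (cyc k (i + 1)) := fun i =>
    (adj_cyc_iff k _ _).mpr (c5_adj_one i)
  obtain ⟨i, hi, hi'⟩ := fin5_change (fun i => s(cyc k i, cyc k (i + 1)) ∈ E1)
    (by
      obtain ⟨e, he, hn⟩ := h2
      obtain ⟨i, rfl⟩ := cycEdges_spec k e he
      refine ⟨i, ?_⟩
      by_contra hc
      exact hn (red_of_not_blue hcol (hadj i) hc))
    (by
      obtain ⟨e, he, hn⟩ := h1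
      obtain ⟨i, rfl⟩ := cycEdges_spec k e he
      exact ⟨i, hn⟩)
  refine ⟨i, hi, ?_⟩
  have := red_of_not_blue hcol (hadj (i + 1)) hi'
  rwa [(fin5_add i).1] at this

/-- The apex is blue to the first cycle, red to the second one, and red to the vertices
`1, 3, 4` (after a rotation) of the third one. -/
theorem main_config (hcol : IsBRColoring G16 E1 E2) (h3 : ¬ HasMonoNClique G16 E1 3)
    (h4 : ¬ HasMonoNClique G16 E2 4)
    (hnotmono : ∃ i : Fin 3, ¬ (cycEdges i ⊆ E1 ∨ cycEdges i ⊆ E2))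
    {k0 k1 k2 : Fin 3} (h01 : k0 ≠ k1) (h02 : k0 ≠ k2) (h12 : k1 ≠ k2)
    (hA : ∀ i, s(apex, cyc k0 i) ∈ E1) (hB : ∀ i, s(apex, cyc k1 i) ∈ E2) (r : Fin 5)
    (hC1 : s(apex, cyc k2 (r + 1)) ∈ E2) (hC3 : s(apex, cyc k2 (r + 3)) ∈ E2)
    (hC4 : s(apex, cyc k2 (r + 4)) ∈ E2) : False := by
  obtain ⟨k, hk⟩ := hnotmono
  obtain ⟨i, hi1, hi2⟩ := exists_change hcol k hk
  have hk3 : k = k0 ∨ k = k1 ∨ k = k2 := by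
    clear * - h01 h02 h12
    revert k k0 k1 k2; decide
  rcases hk3 with rfl | rfl | rfl
  · apply h3
    refine ⟨{apex, cyc k i, cyc k (i + 1)}, ?_, ?_⟩
    · rw [is3Clique_triple_iff]
      exact ⟨adj_apex _ _, adj_apex _ _, (adj_cyc_iff k _ _).mpr (c5_adj_one i)⟩
    · have a1 := hA i
      have a2 := hA (i + 1)
      have := a1
      have := a2
      have := hi1
      rw [Sym2.eq_swap] at a1 a2 hi1
      intro x hx y hy hxy
      simp only [Finset.mem_insert, Finset.mem_singleton] at hx hy
      rcases hx with rfl | rfl | rfl <;> rcases hy with rfl | rfl | rfl <;>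
        first | exact absurd rfl hxy | assumption
  · refine refute hcol h3 h4 h01 h02 h12 0 i r _ _ _ mainB_run ?_ ?_ <;>
      simp [emb, rot, *]
  · obtain ⟨e1, e2, e3, e4, e5, e6, e7, e8⟩ := fin5_add r
    have hi1' := hi1
    have hi2' := hi2
    rw [Sym2.eq_swap] at hi1' hi2'
    rcases fin5_rot r i with rfl | rfl | rfl | rfl | rfl
    · refine refute hcol h3 h4 h01 h02 h12 0 0 i _ _ _ mainC0_run ?_ ?_ <;>
        simp [emb, rot, hA, hB, hC1, hC3, hC4, hi1, hi2, hi1', hi2']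
    · rw [e1] at hi1 hi1' hi2 hi2'
      rw [e2] at hi2 hi2'
      refine refute hcol h3 h4 h01 h02 h12 0 0 r _ _ _ mainC1_run ?_ ?_ <;>
        simp [emb, rot, hA, hB, hC1, hC3, hC4, hi1, hi2, hi1', hi2']
    · rw [e3] at hi1 hi1' hi2 hi2'
      rw [e4] at hi2 hi2'
      refine refute hcol h3 h4 h01 h02 h12 0 0 r _ _ _ mainC2_run ?_ ?_ <;>
        simp [emb, rot, hA, hB, hC1, hC3, hC4, hi1, hi2, hi1', hi2']
    · rw [e5] at hi1 hi1' hi2 hi2'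
      rw [e6] at hi2 hi2'
      refine refute hcol h3 h4 h01 h02 h12 0 0 r _ _ _ mainC3_run ?_ ?_ <;>
        simp [emb, rot, hA, hB, hC1, hC3, hC4, hi1, hi2, hi1', hi2']
    · rw [e7] at hi1 hi1' hi2 hi2'
      rw [e8] at hi2 hi2'
      refine refute hcol h3 h4 h01 h02 h12 0 0 r _ _ _ mainC4_run ?_ ?_ <;>
        simp [emb, rot, hA, hB, hC1, hC3, hC4, hi1, hi2, hi1', hi2']

/-- The apex is blue to an edge of the first cycle and red to the second one. -/
theorem config_two (hcol : IsBRColoring G16 E1 E2) (h3 : ¬ HasMonoNClique G16 E1 3)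
    (h4 : ¬ HasMonoNClique G16 E2 4)
    (hnotmono : ∃ i : Fin 3, ¬ (cycEdges i ⊆ E1 ∨ cycEdges i ⊆ E2))
    {k0 k1 k2 : Fin 3} (h01 : k0 ≠ k1) (h02 : k0 ≠ k2) (h12 : k1 ≠ k2)
    (hA : ∃ i, s(apex, cyc k0 i) ∈ E1 ∧ s(apex, cyc k0 (i + 1)) ∈ E1)
    (hB : ∀ i, s(apex, cyc k1 i) ∈ E2) : False := by
  rcases fin5_split (fun i => s(apex, cyc k2 i) ∈ E1) with ⟨r, hr, hr'⟩ | ⟨r, hr1, hr3, hr4⟩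
  · obtain ⟨i, hi, hi'⟩ := hA
    refine refute hcol h3 h4 h02 h01 h12.symm i r 0 _ _ _ blueEE_run ?_ ?_ <;> simp [emb, rot, *]
  · have hr1 := red_of_not_blue hcol (adj_apex _ _) hr1
    have hr3 := red_of_not_blue hcol (adj_apex _ _) hr3
    have hr4 := red_of_not_blue hcol (adj_apex _ _) hr4
    by_cases hall : ∀ i, s(apex, cyc k0 i) ∈ E1
    · exact main_config hcol h3 h4 hnotmono h01 h02 h12 hall hB r hr1 hr3 hr4
    · push Not at hall
      obtain ⟨i, hi⟩ := hall
      have hi := red_of_not_blue hcol (adj_apex _ _) hi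
      have hr4' : s(apex, cyc k2 (r + 3 + 1)) ∈ E2 := by
        rwa [(fin5_add r).2.2.2.2.1]
      refine refute hcol h3 h4 h01 h02 h12 i 0 (r + 3) _ _ _ redVCE_run ?_ ?_ <;> simp [emb, rot, *]

/-- The apex is blue to an edge of the first cycle. -/
theorem config_one (hcol : IsBRColoring G16 E1 E2) (h3 : ¬ HasMonoNClique G16 E1 3)
    (h4 : ¬ HasMonoNClique G16 E2 4)
    (hnotmono : ∃ i : Fin 3, ¬ (cycEdges i ⊆ E1 ∨ cycEdges i ⊆ E2))
    {k0 k1 k2 : Fin 3} (h01 : k0 ≠ k1) (h02 : k0 ≠ k2) (h12 : k1 ≠ k2)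
    (hA : ∃ i, s(apex, cyc k0 i) ∈ E1 ∧ s(apex, cyc k0 (i + 1)) ∈ E1) : False := by
  by_cases h1 : ∃ i, s(apex, cyc k1 i) ∈ E1
  · by_cases h2 : ∃ i, s(apex, cyc k2 i) ∈ E1
    · obtain ⟨i, hi, hi'⟩ := hA
      obtain ⟨j, hj⟩ := h1
      obtain ⟨l, hl⟩ := h2
      refine refute hcol h3 h4 h01 h02 h12 i j l _ _ _ blueEVV_run ?_ ?_ <;> simp [emb, rot, *]
    · push Not at h2
      exact config_two hcol h3 h4 hnotmono h02 h01 h12.symm hA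
        fun i => red_of_not_blue hcol (adj_apex _ _) (h2 i)
  · push Not at h1
    exact config_two hcol h3 h4 hnotmono h01 h02 h12 hA
      fun i => red_of_not_blue hcol (adj_apex _ _) (h1 i)

theorem no_free (hcol : IsBRColoring G16 E1 E2) (h3 : ¬ HasMonoNClique G16 E1 3)
    (h4 : ¬ HasMonoNClique G16 E2 4)
    (hnotmono : ∃ i : Fin 3, ¬ (cycEdges i ⊆ E1 ∨ cycEdges i ⊆ E2)) : False := by
  have key : ∀ k : Fin 3, ∃ r, s(apex, cyc k r) ∈ E2 ∧ s(apex, cyc k (r + 1)) ∈ E2 := by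
    intro k
    rcases fin5_split (fun i => s(apex, cyc k i) ∈ E1) with h | ⟨r, -, hr3, hr4⟩
    · exfalso
      have hk : ∃ k1 k2 : Fin 3, k ≠ k1 ∧ k ≠ k2 ∧ k1 ≠ k2 := by
        clear * -
        revert k; decide
      obtain ⟨k1, k2, h01, h02, h12⟩ := hk
      exact config_one hcol h3 h4 hnotmono h01 h02 h12 h
    · refine ⟨r + 3, red_of_not_blue hcol (adj_apex _ _) hr3, ?_⟩
      rw [(fin5_add r).2.2.2.2.1]
      exact red_of_not_blue hcol (adj_apex _ _) hr4
  obtain ⟨r0, _, _⟩ := key 0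
  obtain ⟨r1, _, _⟩ := key 1
  obtain ⟨r2, _, _⟩ := key 2
  refine refute hcol h3 h4 (k0 := 0) (k1 := 1) (k2 := 2) (by decide) (by decide) (by decide)
    r0 r1 r2 _ _ _ redEEE_run ?_ ?_ <;> simp [emb, rot, *]

end Coloring

/-- **Lemma 2.5.** Let `G = K₁ + C₅⁽¹⁾ + C₅⁽²⁾ + C₅⁽³⁾` and let `E(G) = E₁ ∪ E₂` be a
blue-red coloring in which some of the three 5-cycles is not monochromatic.
Then the coloring is not `(3,4)`-free: there is a blue 3-clique or a red 4-clique. -/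
theorem lemma_2_5 (E1 E2 : Set (Sym2 V16)) (hcol : IsBRColoring G16 E1 E2)
    (hnotmono : ∃ i : Fin 3, ¬ (cycEdges i ⊆ E1 ∨ cycEdges i ⊆ E2)) :
    HasMonoNClique G16 E1 3 ∨ HasMonoNClique G16 E2 4 := by
  by_contra h
  push Not at h
  exact no_free hcol h.1 h.2 hnotmono
end
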